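/- Let S be a quasi-hereditary algebra with a simple-preserving duality whose partial order is minimal for the quasi-hereditary structure. If S satisfies property A (μ < λ implies gfd(L(μ)) ≤ gfd(L(λ))), then S satisfies property D (wfd(∇(λ)) = wfd(L(λ)) for all λ ∈ Λ⁺). -/

import Mathlib

/-!
Common definitions for formalizing "On the global and ∇-filtration dimensions of
quasi-hereditary algebras" by Erdmann and Parker.

We work with a finite-dimensional algebra `S` over a field `k`; since `S` is
finite dimensional over `k`, the finite-dimensional `S`-modules are exactly the
finitely generated ones, so we express finite-dimensionality of a module `M` as
`Module.Finite S M`.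
-/

open CategoryTheory

namespace QHPaper

variable (S : Type) [Ring S]

/-- The subquotient `B ⧸ A` associated to two submodules `A B` of `M`. -/
abbrev subquot {M : ModuleCat.{0} S} (A B : Submodule S ↥M) : Type :=
  ↥B ⧸ (Submodule.comap B.subtype A)

/-- A filtration `⊥ = f 0 ≤ f 1 ≤ ⋯ ≤ f n = ⊤` of `M` whose `i`-th section
`f (i+1) / f i` is isomorphic to the prescribed module `D i`. -/
def HasFiltrationWithSections (M : ModuleCat.{0} S) (n : ℕ)
    (f : Fin (n + 1) → Submodule S ↥M) (D : Fin n → ModuleCat.{0} S) : Prop :=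
  Monotone f ∧ f 0 = ⊥ ∧ f (Fin.last n) = ⊤ ∧
    ∀ i : Fin n, Nonempty ((subquot S (f i.castSucc) (f i.succ)) ≃ₗ[S] ↥(D i))

/-- `L` occurs as a (simple) subquotient of `M`; for `L` simple this says that `L`
is a composition factor of `M`. -/
def IsCompFactor (L M : ModuleCat.{0} S) : Prop :=
  ∃ (A B : Submodule S ↥M), A ≤ B ∧ Nonempty ((subquot S A B) ≃ₗ[S] ↥L)

/-- `L` occurs with multiplicity `m` among the sections of a composition series of `M`. -/
def CompFactorMult (L M : ModuleCat.{0} S) (m : ℕ) : Prop :=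
  ∃ (n : ℕ) (f : Fin (n + 1) → Submodule S ↥M),
    Monotone f ∧ f 0 = ⊥ ∧ f (Fin.last n) = ⊤ ∧
    (∀ i : Fin n, IsSimpleModule S (subquot S (f i.castSucc) (f i.succ))) ∧
    Nat.card {i : Fin n // Nonempty ((subquot S (f i.castSucc) (f i.succ)) ≃ₗ[S] ↥L)} = m

/-- `P` is a projective cover of `M`: `P` is projective and there is a surjection
`P → M` whose kernel is superfluous in `P`. -/
def IsProjCover (P M : ModuleCat.{0} S) : Prop :=
  Module.Projective S ↥P ∧ ∃ π : ↥P →ₗ[S] ↥M, Function.Surjective π ∧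
    ∀ N : Submodule S ↥P, N ⊔ LinearMap.ker π = ⊤ → N = ⊤

/-- `I` is an injective hull of `M`: `I` is injective and there is an injection
`M → I` with essential image. -/
def IsInjHull (I M : ModuleCat.{0} S) : Prop :=
  Module.Injective S ↥I ∧ ∃ ι : ↥M →ₗ[S] ↥I, Function.Injective ι ∧
    ∀ N : Submodule S ↥I, N ⊓ LinearMap.range ι = ⊥ → N = ⊥

/-- The data of a quasi-hereditary algebra structure on `S` with weight poset `Λ`:
a full set `L` of pairwise non-isomorphic simple modules, their projective covers `P`
and injective hulls `I`, the standard modules `std` (largest quotient of `P lam` with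
all composition factors `L mu`, `mu ≤ lam`), the costandard modules `costd`
(largest submodule of `I lam` with all composition factors `L mu`, `mu ≤ lam`),
such that `L lam` occurs exactly once in `std lam` and `P lam` is filtered by
standard modules `std mu` with `mu ≥ lam`, with `std lam` occurring exactly once. -/
structure QHData (Λ : Type) [Fintype Λ] [PartialOrder Λ] where
  L : Λ → ModuleCat.{0} S
  P : Λ → ModuleCat.{0} S
  I : Λ → ModuleCat.{0} S
  std : Λ → ModuleCat.{0} S
  costd : Λ → ModuleCat.{0} S
  finiteL : ∀ lam, Module.Finite S ↥(L lam)
  simpleL : ∀ lam, IsSimpleModule S ↥(L lam)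
  nonisoL : ∀ lam mu, lam ≠ mu → IsEmpty (↥(L lam) ≃ₗ[S] ↥(L mu))
  fullL : ∀ M : ModuleCat.{0} S, IsSimpleModule S ↥M → ∃ lam, Nonempty (↥M ≃ₗ[S] ↥(L lam))
  projCover : ∀ lam, IsProjCover S (P lam) (L lam)
  injHull : ∀ lam, IsInjHull S (I lam) (L lam)
  stdSpec : ∀ lam, ∃ K : Submodule S ↥(P lam),
    Nonempty (↥(std lam) ≃ₗ[S] (↥(P lam) ⧸ K)) ∧
    (∀ mu, IsCompFactor S (L mu) (ModuleCat.of S (↥(P lam) ⧸ K)) → mu ≤ lam) ∧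
    ∀ K' : Submodule S ↥(P lam),
      (∀ mu, IsCompFactor S (L mu) (ModuleCat.of S (↥(P lam) ⧸ K')) → mu ≤ lam) → K ≤ K'
  costdSpec : ∀ lam, ∃ V : Submodule S ↥(I lam),
    Nonempty (↥(costd lam) ≃ₗ[S] ↥V) ∧
    (∀ mu, IsCompFactor S (L mu) (ModuleCat.of S ↥V) → mu ≤ lam) ∧
    ∀ V' : Submodule S ↥(I lam),
      (∀ mu, IsCompFactor S (L mu) (ModuleCat.of S ↥V') → mu ≤ lam) → V' ≤ V
  multOne : ∀ lam, CompFactorMult S (L lam) (std lam) 1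
  projFilt : ∀ lam, ∃ (n : ℕ) (f : Fin (n + 1) → Submodule S ↥(P lam)) (g : Fin n → Λ),
    HasFiltrationWithSections S (P lam) n f (fun i => std (g i)) ∧
    (∀ i, lam ≤ g i) ∧ Nat.card {i : Fin n // g i = lam} = 1

variable {Λ : Type} [Fintype Λ] [PartialOrder Λ]

/-- `M` has a filtration with costandard sections, i.e. `M ∈ F(∇)`. -/
def InCostdFilt (Q : QHData S Λ) (M : ModuleCat.{0} S) : Prop :=
  ∃ (n : ℕ) (f : Fin (n + 1) → Submodule S ↥M) (g : Fin n → Λ),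
    HasFiltrationWithSections S M n f (fun i => Q.costd (g i))

/-- `M` has a filtration with standard sections, i.e. `M ∈ F(Δ)`. -/
def InStdFilt (Q : QHData S Λ) (M : ModuleCat.{0} S) : Prop :=
  ∃ (n : ℕ) (f : Fin (n + 1) → Submodule S ↥M) (g : Fin n → Λ),
    HasFiltrationWithSections S M n f (fun i => Q.std (g i))

/-- `0 → N 0 → N 1 → ⋯ → N (n+1) → 0` is exact. -/
def IsExactSeq (n : ℕ) (N : Fin (n + 2) → ModuleCat.{0} S)
    (f : ∀ i : Fin (n + 1), ↥(N i.castSucc) →ₗ[S] ↥(N i.succ)) : Prop :=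
  Function.Injective (f 0) ∧ Function.Surjective (f (Fin.last n)) ∧
    ∀ i : Fin n, LinearMap.range (f i.castSucc) = LinearMap.ker (f i.succ)

/-- `M` has a ∇-resolution (co-resolution by modules in `F(∇)`) of length `d`:
`0 → M → M₀ → ⋯ → M_d → 0` with each `Mᵢ ∈ F(∇)`. -/
def GfdLE (Q : QHData S Λ) (M : ModuleCat.{0} S) (d : ℕ) : Prop :=
  ∃ (N : Fin (d + 2) → ModuleCat.{0} S)
    (f : ∀ i : Fin (d + 1), ↥(N i.castSucc) →ₗ[S] ↥(N i.succ)),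
    IsExactSeq S d N f ∧ N 0 = M ∧ ∀ i : Fin (d + 1), InCostdFilt S Q (N i.succ)

/-- The ∇-filtration dimension (good filtration dimension) of a module. -/
noncomputable def gfd (Q : QHData S Λ) (M : ModuleCat.{0} S) : ℕ :=
  sInf {d | GfdLE S Q M d}

/-- `M` has a resolution `0 → M_d → ⋯ → M₀ → M → 0` with each `Mᵢ ∈ F(Δ)`. -/
def WfdLE (Q : QHData S Λ) (M : ModuleCat.{0} S) (d : ℕ) : Prop :=
  ∃ (N : Fin (d + 2) → ModuleCat.{0} S)
    (f : ∀ i : Fin (d + 1), ↥(N i.castSucc) →ₗ[S] ↥(N i.succ)),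
    IsExactSeq S d N f ∧ N (Fin.last (d + 1)) = M ∧
    ∀ i : Fin (d + 1), InStdFilt S Q (N i.castSucc)

/-- The Δ-filtration dimension of a module. -/
noncomputable def wfd (Q : QHData S Λ) (M : ModuleCat.{0} S) : ℕ :=
  sInf {d | WfdLE S Q M d}

/-- `M` has a projective resolution of length `d`. -/
def ProjdimLE (M : ModuleCat.{0} S) (d : ℕ) : Prop :=
  ∃ (N : Fin (d + 2) → ModuleCat.{0} S)
    (f : ∀ i : Fin (d + 1), ↥(N i.castSucc) →ₗ[S] ↥(N i.succ)),
    IsExactSeq S d N f ∧ N (Fin.last (d + 1)) = M ∧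
    ∀ i : Fin (d + 1), Module.Projective S ↥(N i.castSucc)

/-- The projective dimension of a module. -/
noncomputable def projdim (M : ModuleCat.{0} S) : ℕ :=
  sInf {d | ProjdimLE S M d}

/-- `M` has an injective resolution of length `d`. -/
def InjdimLE (M : ModuleCat.{0} S) (d : ℕ) : Prop :=
  ∃ (N : Fin (d + 2) → ModuleCat.{0} S)
    (f : ∀ i : Fin (d + 1), ↥(N i.castSucc) →ₗ[S] ↥(N i.succ)),
    IsExactSeq S d N f ∧ N 0 = M ∧
    ∀ i : Fin (d + 1), Module.Injective S ↥(N i.succ)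

/-- The injective dimension of a module. -/
noncomputable def injdim (M : ModuleCat.{0} S) : ℕ :=
  sInf {d | InjdimLE S M d}

/-- `gfd(S)`: the supremum of the ∇-filtration dimensions of all
finite-dimensional `S`-modules. -/
noncomputable def gfdAlg (Q : QHData S Λ) : ℕ :=
  sSup {d | ∃ M : ModuleCat.{0} S, Module.Finite S ↥M ∧ gfd S Q M = d}

/-- `wfd(S)`: the supremum of the Δ-filtration dimensions of all
finite-dimensional `S`-modules. -/
noncomputable def wfdAlg (Q : QHData S Λ) : ℕ :=
  sSup {d | ∃ M : ModuleCat.{0} S, Module.Finite S ↥M ∧ wfd S Q M = d}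

/-- The global dimension of `S`: the supremum of the projective dimensions of all
finite-dimensional `S`-modules. -/
noncomputable def globdim : ℕ :=
  sSup {d | ∃ M : ModuleCat.{0} S, Module.Finite S ↥M ∧ projdim S M = d}

/-- `Ext^n_S(A, B) ≠ 0`. -/
noncomputable def extNe (A B : ModuleCat.{0} S) (n : ℕ) : Prop :=
  Nontrivial ↥(((Ext ℤ (ModuleCat.{0} S) n).obj (Opposite.op A)).obj B)

/-- A simple-preserving duality on `S`: a contravariant, exact, fully faithful,
additive self-functor `D` on the category of finite-dimensional `S`-modules with
`D (D M) ≅ M` and `D (L lam) ≅ L lam` for all `lam`. -/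
structure Duality (Q : QHData S Λ) where
  D : ModuleCat.{0} S → ModuleCat.{0} S
  Dmap : ∀ {A B : ModuleCat.{0} S}, (↥A →ₗ[S] ↥B) → (↥(D B) →ₗ[S] ↥(D A))
  finD : ∀ M : ModuleCat.{0} S, Module.Finite S ↥M → Module.Finite S ↥(D M)
  Did : ∀ A : ModuleCat.{0} S, Module.Finite S ↥A →
    Dmap (LinearMap.id : ↥A →ₗ[S] ↥A) = LinearMap.id
  Dcomp : ∀ {A B C : ModuleCat.{0} S}, Module.Finite S ↥A → Module.Finite S ↥B →
    Module.Finite S ↥C → ∀ (f : ↥A →ₗ[S] ↥B) (g : ↥B →ₗ[S] ↥C),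
      Dmap (g ∘ₗ f) = Dmap f ∘ₗ Dmap g
  Dadd : ∀ {A B : ModuleCat.{0} S}, Module.Finite S ↥A → Module.Finite S ↥B →
    ∀ (f g : ↥A →ₗ[S] ↥B), Dmap (f + g) = Dmap f + Dmap g
  Dfull : ∀ {A B : ModuleCat.{0} S}, Module.Finite S ↥A → Module.Finite S ↥B →
    Function.Bijective (fun f : ↥A →ₗ[S] ↥B => Dmap f)
  Dexact : ∀ {A B C : ModuleCat.{0} S}, Module.Finite S ↥A → Module.Finite S ↥B →
    Module.Finite S ↥C → ∀ (f : ↥A →ₗ[S] ↥B) (g : ↥B →ₗ[S] ↥C),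
      Function.Injective f → Function.Surjective g →
      LinearMap.range f = LinearMap.ker g →
      Function.Injective (Dmap g) ∧ Function.Surjective (Dmap f) ∧
        LinearMap.range (Dmap g) = LinearMap.ker (Dmap f)
  Dinvol : ∀ M : ModuleCat.{0} S, Module.Finite S ↥M → Nonempty (↥(D (D M)) ≃ₗ[S] ↥M)
  DL : ∀ lam, Nonempty (↥(D (Q.L lam)) ≃ₗ[S] ↥(Q.L lam))

/-- Strong property A: `mu < lam` implies `gfd (L mu) < gfd (L lam)`. -/
def StrongPropA (Q : QHData S Λ) : Prop :=
  ∀ mu lam : Λ, mu < lam → gfd S Q (Q.L mu) < gfd S Q (Q.L lam)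

/-- Property A: `mu < lam` implies `gfd (L mu) ≤ gfd (L lam)`. -/
def PropA (Q : QHData S Λ) : Prop :=
  ∀ mu lam : Λ, mu < lam → gfd S Q (Q.L mu) ≤ gfd S Q (Q.L lam)

/-- Property B: `mu < lam` implies `wfd (∇ mu) ≤ wfd (∇ lam)`. -/
def PropB (Q : QHData S Λ) : Prop :=
  ∀ mu lam : Λ, mu < lam → wfd S Q (Q.costd mu) ≤ wfd S Q (Q.costd lam)

/-- Property C: `wfd (∇ lam) = gfd S - inj (∇ lam)` for all `lam`. -/
def PropC (Q : QHData S Λ) : Prop :=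
  ∀ lam : Λ, wfd S Q (Q.costd lam) = gfdAlg S Q - injdim S (Q.costd lam)

/-- Property D: `wfd (∇ lam) = wfd (L lam)` for all `lam`. -/
def PropD (Q : QHData S Λ) : Prop :=
  ∀ lam : Λ, wfd S Q (Q.costd lam) = wfd S Q (Q.L lam)

/-- Property E: `mu < lam` implies `inj (∇ mu) ≥ inj (∇ lam)`. -/
def PropE (Q : QHData S Λ) : Prop :=
  ∀ mu lam : Λ, mu < lam → injdim S (Q.costd lam) ≤ injdim S (Q.costd mu)

/-- The partial order is minimal for the quasi-hereditary structure: whenever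
`mu < lam` are adjacent, `L mu` is a composition factor of `Δ lam` or of `∇ lam`. -/
def MinimalOrder (Q : QHData S Λ) : Prop :=
  ∀ mu lam : Λ, mu < lam → (¬ ∃ nu, mu < nu ∧ nu < lam) →
    IsCompFactor S (Q.L mu) (Q.std lam) ∨ IsCompFactor S (Q.L mu) (Q.costd lam)

/-- `S` is connected (indecomposable as an algebra, i.e. one block): the only
central idempotents are `0` and `1`. -/
def ConnectedRing : Prop :=
  ∀ c : S, c * c = c → (∀ s : S, c * s = s * c) → c = 0 ∨ c = 1

/-- A tilting module: a module in `F(Δ) ∩ F(∇)`. -/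
def IsTilting (Q : QHData S Λ) (T : ModuleCat.{0} S) : Prop :=
  InStdFilt S Q T ∧ InCostdFilt S Q T

/-- The indecomposable tilting module `T(lam)`: an indecomposable tilting module in
which `L lam` occurs exactly once and all other composition factors `L mu` have
`mu < lam`. -/
def IsIndecTilting (Q : QHData S Λ) (lam : Λ) (T : ModuleCat.{0} S) : Prop :=
  IsTilting S Q T ∧ Nontrivial ↥T ∧
    (∀ A B : Submodule S ↥T, IsCompl A B → A = ⊥ ∨ B = ⊥) ∧
    CompFactorMult S (Q.L lam) T 1 ∧
    ∀ mu, IsCompFactor S (Q.L mu) T → mu = lam ∨ mu < lam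

/-- A full tilting module: a (finite-dimensional) tilting module having every
indecomposable tilting module as a direct summand. -/
def IsFullTilting (Q : QHData S Λ) (T : ModuleCat.{0} S) : Prop :=
  IsTilting S Q T ∧ Module.Finite S ↥T ∧
    ∀ (lam : Λ) (Tl : ModuleCat.{0} S), IsIndecTilting S Q lam Tl →
      ∃ Cc : ModuleCat.{0} S, Nonempty (↥T ≃ₗ[S] (↥Tl × ↥Cc))

/-- The Ringel dual ring `S' = End_S(T)^op`. -/
abbrev RingelDualRing (T : ModuleCat.{0} S) : Type := (Module.End S ↥T)ᵐᵒᵖ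

/-- `Hom_S(T, X)` is a module over `S' = End_S(T)^op` via `f • φ = φ ∘ f`. -/
instance homTModule (T X : ModuleCat.{0} S) :
    Module (RingelDualRing S T) (↥T →ₗ[S] ↥X) where
  smul a φ := φ ∘ₗ a.unop
  one_smul φ := rfl
  mul_smul a b φ := rfl
  smul_zero a := rfl
  smul_add a φ ψ := rfl
  add_smul a b φ := by
    ext x
    show φ ((a.unop + b.unop) x) = φ (a.unop x) + φ (b.unop x)
    rw [LinearMap.add_apply, map_add]
  zero_smul φ := by
    ext x
    show φ ((0 : Module.End S ↥T) x) = 0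
    rw [LinearMap.zero_apply, map_zero]

/-- The `S'`-module `Hom_S(T, X)`, i.e. the image of `X` under the functor
`F = Hom_S(T, -)`. -/
noncomputable def homTMod (T X : ModuleCat.{0} S) :
    ModuleCat.{0} (RingelDualRing S T) :=
  ModuleCat.of (RingelDualRing S T) (↥T →ₗ[S] ↥X)

/-- `Q'` is a Ringel dual quasi-hereditary structure for `(Q, T)`:
`T` is a full tilting module, `Q'` is a quasi-hereditary structure on
`S' = End_S(T)^op` for the opposite poset, and its standard modules are
`Δ'(lam) = Hom_S(T, ∇(lam))`. -/
def IsRingelDualData (Q : QHData S Λ) (T : ModuleCat.{0} S)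
    (Q' : QHData (RingelDualRing S T) Λᵒᵈ) : Prop :=
  IsFullTilting S Q T ∧
    ∀ lam : Λ, Nonempty
      (↥(Q'.std (OrderDual.toDual lam)) ≃ₗ[RingelDualRing S T]
        (↥T →ₗ[S] ↥(Q.costd lam)))

/-- `0 → T_d → ⋯ → T_0 → M → 0` exact with all `T_i` tilting modules. -/
def TiltResLE (Q : QHData S Λ) (M : ModuleCat.{0} S) (d : ℕ) : Prop :=
  ∃ (N : Fin (d + 2) → ModuleCat.{0} S)
    (f : ∀ i : Fin (d + 1), ↥(N i.castSucc) →ₗ[S] ↥(N i.succ)),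
    IsExactSeq S d N f ∧ N (Fin.last (d + 1)) = M ∧
    ∀ i : Fin (d + 1), IsTilting S Q (N i.castSucc)

/-- An idempotent `e` is primitive if it is nonzero and is not the sum of two
nonzero orthogonal idempotents. -/
def IsPrimitiveIdempotent (e : S) : Prop :=
  e * e = e ∧ e ≠ 0 ∧ ∀ a b : S, a * a = a → b * b = b → a * b = 0 → b * a = 0 →
    e = a + b → a = 0 ∨ b = 0

/-- The additive subgroup `e•M = {m | e • m = m}` of `M` (for `e` idempotent). -/
def cornerSet (eG : S) (M : ModuleCat.{0} S) : AddSubgroup ↥M where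
  carrier := {m | eG • m = m}
  add_mem' := by
    intro a b ha hb
    simp only [Set.mem_setOf_eq] at *
    rw [smul_add, ha, hb]
  zero_mem' := by
    simp only [Set.mem_setOf_eq]
    rw [smul_zero]
  neg_mem' := by
    intro a ha
    simp only [Set.mem_setOf_eq] at *
    rw [smul_neg, ha]

/-- The `R`-module structure on `e•M`, where `ι : R → S` identifies `R` with the
corner ring `eSe` (as a non-unital ring, with `ι 1 = e`). -/
def cornerModuleStructure (R : Type) [Ring R] (ι : R →ₙ+* S) (eG : S)
    (hone : ι 1 = eG) (hrange : ∀ r : R, eG * ι r * eG = ι r)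
    (M : ModuleCat.{0} S) : Module R ↥(cornerSet S eG M) where
  smul r m := ⟨ι r • (m : ↥M), by
    have hm : eG • (m : ↥M) = (m : ↥M) := m.2
    show eG • (ι r • (m : ↥M)) = ι r • (m : ↥M)
    have h : eG • (ι r • (m : ↥M)) = (eG * ι r * eG) • (m : ↥M) := by
      rw [mul_assoc, mul_smul, mul_smul, hm]
    rw [h, hrange]⟩
  one_smul m := by
    apply Subtype.ext
    show ι 1 • (m : ↥M) = (m : ↥M)
    rw [hone]
    exact m.2
  mul_smul r s m := by
    apply Subtype.ext
    show ι (r * s) • (m : ↥M) = ι r • (ι s • (m : ↥M))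
    rw [map_mul, mul_smul]
  smul_zero r := by
    apply Subtype.ext
    show ι r • (0 : ↥M) = 0
    rw [smul_zero]
  smul_add r m n := by
    apply Subtype.ext
    show ι r • ((m : ↥M) + (n : ↥M)) = ι r • (m : ↥M) + ι r • (n : ↥M)
    rw [smul_add]
  add_smul r s m := by
    apply Subtype.ext
    show ι (r + s) • (m : ↥M) = ι r • (m : ↥M) + ι s • (m : ↥M)
    rw [map_add, add_smul]
  zero_smul m := by
    apply Subtype.ext
    show ι 0 • (m : ↥M) = 0
    rw [map_zero, zero_smul]

/-- The `R`-module `e•M`, where `R ≅ eSe` via `ι`. -/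
noncomputable def cornerMod (R : Type) [Ring R] (ι : R →ₙ+* S) (eG : S)
    (hone : ι 1 = eG) (hrange : ∀ r : R, eG * ι r * eG = ι r)
    (M : ModuleCat.{0} S) : ModuleCat.{0} R :=
  @ModuleCat.of R _ ↥(cornerSet S eG M) _
    (cornerModuleStructure S R ι eG hone hrange M)

end QHPaper

/-!
The class `F(Δ)` is closed under extensions and under kernels of epimorphisms, and every module is a
quotient of one of its members; hence `wfd` behaves in short exact sequences like projective
dimension. A simple-preserving duality interchanges `Δ(λ)` and `∇(λ)`, so `gfd(L(μ)) = wfd(L(μ))`,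
and property A says that `wfd(L(μ)) ≤ wfd(L(λ))` for all `μ ≤ λ`. Put `w = wfd(L(λ))`.

All composition factors of `∇(λ)` and of the cokernel `C` of `L(λ) → ∇(λ)` are of the form `L(μ)`
with `μ ≤ λ`, so both modules have `wfd` at most `w`. If `wfd(∇(λ)) < w`, then
`0 → L(λ) → ∇(λ) → C → 0` exhibits `L(λ)` as the kernel of an epimorphism between modules with `wfd`
at most `w - 1` and `w`, which forces `wfd(L(λ)) ≤ w - 1`.
-/

namespace QHPaper

universe u v

section ShortExactSequences

section IsShortExact

variable {R A B C X : Type*} [Ring R] [AddCommGroup A] [Module R A] [AddCommGroup B] [Module R B]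
  [AddCommGroup C] [Module R C] [AddCommGroup X] [Module R X]

/-- `0 → A → B → C → 0` is a short exact sequence with maps `f` and `g`. Stated for bare linear
maps, so that submodules and quotients can be plugged in directly. -/
structure IsShortExact (f : A →ₗ[R] B) (g : B →ₗ[R] C) : Prop where
  injective : Function.Injective f
  exact : Function.Exact f g
  surjective : Function.Surjective g

namespace IsShortExact

variable {f : A →ₗ[R] B} {g : B →ₗ[R] C}

theorem exists_lift (h : IsShortExact f g) (φ : X →ₗ[R] B) (hφ : g ∘ₗ φ = 0) :
    ∃ ψ : X →ₗ[R] A, f ∘ₗ ψ = φ := by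
  have hmem (x : X) : φ x ∈ LinearMap.range f := (h.exact (φ x)).1 (LinearMap.congr_fun hφ x)
  refine ⟨(LinearEquiv.ofInjective f h.injective).symm ∘ₗ φ.codRestrict _ hmem, ?_⟩
  ext x
  exact congrArg Subtype.val
    ((LinearEquiv.ofInjective f h.injective).apply_symm_apply ⟨φ x, hmem x⟩)

theorem exists_desc (h : IsShortExact f g) (φ : B →ₗ[R] X) (hφ : φ ∘ₗ f = 0) :
    ∃ ψ : C →ₗ[R] X, ψ ∘ₗ g = φ := by
  refine ⟨(LinearMap.range f).liftQ φ (LinearMap.range_le_ker_iff.2 hφ) ∘ₗ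
    (h.exact.linearEquivOfSurjective h.surjective).symm, ?_⟩
  ext b
  have hb : (h.exact.linearEquivOfSurjective h.surjective).symm (g b) =
      (LinearMap.range f).mkQ b :=
    (LinearEquiv.symm_apply_eq _).2 rfl
  simp [hb]

theorem subtype_ker {g : B →ₗ[R] C} (hg : Function.Surjective g) :
    IsShortExact (LinearMap.ker g).subtype g :=
  ⟨Subtype.val_injective, g.exact_subtype_ker_map, hg⟩

theorem mkQ_range {f : A →ₗ[R] B} (hf : Function.Injective f) :
    IsShortExact f (LinearMap.range f).mkQ :=
  ⟨hf, f.exact_map_mkQ_range, Submodule.mkQ_surjective _⟩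

theorem subtype_mkQ (N : Submodule R B) : IsShortExact N.subtype N.mkQ :=
  ⟨Subtype.val_injective, LinearMap.exact_subtype_mkQ N, Submodule.mkQ_surjective _⟩

theorem bijective_of_subsingleton_right (h : IsShortExact f g) [Subsingleton C] :
    Function.Bijective f :=
  ⟨h.injective, fun b => (h.exact b).1 (Subsingleton.elim _ _)⟩

theorem exists_ker_comp (h : IsShortExact f g) (t : C →ₗ[R] X) :
    ∃ (f' : A →ₗ[R] LinearMap.ker (t ∘ₗ g)) (g' : LinearMap.ker (t ∘ₗ g) →ₗ[R] LinearMap.ker t),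
      IsShortExact f' g' := by
  refine ⟨f.codRestrict _ fun a => ?_, g.restrict fun b hb => hb, ?_, ?_, ?_⟩
  · simp [h.exact.apply_apply_eq_zero]
  · exact fun a a' haa' => h.injective (congrArg Subtype.val haa')
  · rintro ⟨b, hb⟩
    constructor
    · intro hgb
      obtain ⟨a, rfl⟩ := (h.exact b).1 (congrArg Subtype.val hgb)
      exact ⟨a, rfl⟩
    · rintro ⟨a, ha⟩
      exact Subtype.ext ((h.exact b).2 ⟨a, congrArg Subtype.val ha⟩)
  · rintro ⟨c, hc⟩
    obtain ⟨b, rfl⟩ := h.surjective c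
    exact ⟨⟨b, hc⟩, rfl⟩

theorem nonempty_ker_equiv_of_bijective_comp (h : IsShortExact f g) {t : B →ₗ[R] X}
    (ht : Function.Bijective (t ∘ₗ f)) : Nonempty (LinearMap.ker t ≃ₗ[R] C) := by
  refine ⟨LinearEquiv.ofBijective (g ∘ₗ (LinearMap.ker t).subtype) ⟨?_, fun c => ?_⟩⟩
  · rw [injective_iff_map_eq_zero]
    rintro ⟨b, hb⟩ hgb
    obtain ⟨a, rfl⟩ := (h.exact b).1 hgb
    obtain rfl : a = 0 := ht.1 (hb.trans (map_zero _).symm)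
    exact Subtype.ext (map_zero f)
  · obtain ⟨b, rfl⟩ := h.surjective c
    obtain ⟨a, ha : t (f a) = t b⟩ := ht.2 (t b)
    exact ⟨⟨b - f a, by simp [ha]⟩, by simp [h.exact.apply_apply_eq_zero]⟩

end IsShortExact

end IsShortExact

variable {R : Type u} [Ring R] {A B C D E K F P : ModuleCat.{v} R}

/-- There is a short exact sequence `0 → A → B → C → 0`. The maps are forgotten: filtrations and
resolutions only record that such sequences exist. -/
def ShortExactSeq (A B C : ModuleCat.{v} R) : Prop :=
  ∃ (f : A →ₗ[R] B) (g : B →ₗ[R] C), IsShortExact f g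

namespace ShortExactSeq

theorem congr {A' B' C' : ModuleCat.{v} R} (h : ShortExactSeq A B C) (a : A ≃ₗ[R] A')
    (b : B ≃ₗ[R] B') (c : C ≃ₗ[R] C') : ShortExactSeq A' B' C' := by
  obtain ⟨f, g, h⟩ := h
  refine ⟨b ∘ₗ f ∘ₗ a.symm, c ∘ₗ g ∘ₗ b.symm, ?_, ?_, ?_⟩
  · exact b.injective.comp (h.injective.comp a.symm.injective)
  · refine h.exact.of_ladder_linearEquiv_of_exact (e₁ := a) (e₂ := b) (e₃ := c) ?_ ?_ <;>
      ext <;> simp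
  · exact c.surjective.comp (h.surjective.comp b.symm.surjective)

theorem of_surjective (g : B →ₗ[R] C) (hg : Function.Surjective g) :
    ShortExactSeq (ModuleCat.of R (LinearMap.ker g)) B C :=
  ⟨_, g, .subtype_ker hg⟩

theorem of_submodule (N : Submodule R B) :
    ShortExactSeq (ModuleCat.of R N) B (ModuleCat.of R (B ⧸ N)) :=
  ⟨_, _, .subtype_mkQ N⟩

theorem zero_left (M : ModuleCat.{v} R) : ShortExactSeq (ModuleCat.of R PUnit) M M :=
  ⟨0, LinearMap.id, Function.injective_of_subsingleton _,
    (LinearMap.exact_zero_iff_injective _ _).2 Function.injective_id, Function.surjective_id⟩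

theorem zero_right (M : ModuleCat.{v} R) : ShortExactSeq M M (ModuleCat.of R PUnit) :=
  ⟨LinearMap.id, 0, Function.injective_id,
    (LinearMap.exact_zero_iff_surjective _ _).2 Function.surjective_id,
    fun _ => ⟨0, Subsingleton.elim _ _⟩⟩

theorem prod (A B : ModuleCat.{v} R) : ShortExactSeq A (ModuleCat.of R (A × B)) B :=
  ⟨LinearMap.inl R A B, LinearMap.snd R A B, LinearMap.inl_injective, .inl_snd,
    LinearMap.snd_surjective⟩

theorem nonempty_equiv_of_subsingleton_right (h : ShortExactSeq A B C) [Subsingleton C] :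
    Nonempty (A ≃ₗ[R] B) := by
  obtain ⟨f, g, h⟩ := h
  exact ⟨.ofBijective f h.bijective_of_subsingleton_right⟩

theorem finite_middle (h : ShortExactSeq A B C) (hA : Module.Finite R A)
    (hC : Module.Finite R C) : Module.Finite R B := by
  obtain ⟨f, g, h⟩ := h
  exact .of_exact h.exact h.surjective

theorem finite_right (h : ShortExactSeq A B C) (hB : Module.Finite R B) : Module.Finite R C := by
  obtain ⟨f, g, h⟩ := h
  exact .of_surjective g h.surjective

theorem finite_left [IsNoetherianRing R] (h : ShortExactSeq A B C) (hB : Module.Finite R B) :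
    Module.Finite R A := by
  obtain ⟨f, g, h⟩ := h
  exact .of_injective f h.injective

theorem swap_of_section {f : A →ₗ[R] B} {g : B →ₗ[R] C} (h : IsShortExact f g)
    {t : C →ₗ[R] B} (ht : g ∘ₗ t = LinearMap.id) : ShortExactSeq C B A := by
  let e : B ≃ₗ[R] A × C := (h.exact.splitSurjectiveEquiv h.injective ⟨t, ht⟩).1
  exact (prod C A).congr (.refl R C) ((LinearEquiv.prodComm R C A).trans e.symm) (.refl R A)

theorem exists_comap (hB : ShortExactSeq A B C) (hC : ShortExactSeq D C E) :
    ∃ X : ModuleCat.{v} R, ShortExactSeq A X D ∧ ShortExactSeq X B E := by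
  obtain ⟨f, g, hfg⟩ := hB
  obtain ⟨u, t, hut⟩ := hC
  obtain ⟨f', g', h'⟩ := hfg.exists_ker_comp t
  let e : D ≃ₗ[R] LinearMap.ker t :=
    (LinearEquiv.ofInjective u hut.injective).trans (.ofEq _ _ hut.exact.linearMap_ker_eq.symm)
  have hker : ShortExactSeq A (ModuleCat.of R (LinearMap.ker (t ∘ₗ g)))
      (ModuleCat.of R (LinearMap.ker t)) := ⟨f', g', h'⟩
  exact ⟨_, hker.congr (.refl R _) (.refl R _) e.symm,
    of_surjective _ (hut.surjective.comp hfg.surjective)⟩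

theorem exists_quotient (hB : ShortExactSeq A B C) (hE : ShortExactSeq B E F) :
    ∃ X : ModuleCat.{v} R, ShortExactSeq A E X ∧ ShortExactSeq C X F := by
  obtain ⟨f, g, hfg⟩ := hB
  obtain ⟨u, t, hut⟩ := hE
  have hq : IsShortExact (u ∘ₗ f) (LinearMap.range (u ∘ₗ f)).mkQ :=
    .mkQ_range (hut.injective.comp hfg.injective)
  obtain ⟨w, hw⟩ := hfg.exists_desc ((LinearMap.range (u ∘ₗ f)).mkQ ∘ₗ u)
    hq.exact.linearMap_comp_eq_zero
  obtain ⟨s, hs⟩ := hq.exists_desc t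
    (by rw [← LinearMap.comp_assoc, hut.exact.linearMap_comp_eq_zero, LinearMap.zero_comp])
  have hw' (b : B) : w (g b) = (LinearMap.range (u ∘ₗ f)).mkQ (u b) := LinearMap.congr_fun hw b
  refine ⟨ModuleCat.of R (E ⧸ LinearMap.range (u ∘ₗ f)), ⟨_, _, hq⟩, w, s, ?_, ?_, ?_⟩
  · rw [injective_iff_map_eq_zero]
    intro c hc
    obtain ⟨b, rfl⟩ := hfg.surjective c
    obtain ⟨a, ha⟩ := (hq.exact _).1 ((hw' b).symm.trans hc)
    exact (hfg.exact b).2 ⟨a, hut.injective ha⟩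
  · intro x
    obtain ⟨e, rfl⟩ := hq.surjective x
    rw [show s (Submodule.mkQ _ e) = t e from LinearMap.congr_fun hs e, hut.exact e]
    constructor
    · rintro ⟨b, rfl⟩
      exact ⟨g b, hw' b⟩
    · rintro ⟨c, hc⟩
      obtain ⟨b, rfl⟩ := hfg.surjective c
      obtain ⟨a, ha⟩ := (hq.exact (u b - e)).1 (by rw [map_sub, ← hw' b, hc, sub_self])
      exact ⟨b - f a, by rw [map_sub, show u (f a) = u b - e from ha, sub_sub_cancel]⟩
  · refine Function.Surjective.of_comp (g := (LinearMap.range (u ∘ₗ f)).mkQ) ?_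
    rw [← LinearMap.coe_comp, hs]
    exact hut.surjective

theorem exists_pullback (hB : ShortExactSeq A B C) (hF : ShortExactSeq K F C) :
    ∃ X : ModuleCat.{v} R, ShortExactSeq A X F ∧ ShortExactSeq K X B := by
  obtain ⟨f, g, hfg⟩ := hB
  obtain ⟨u, t, hut⟩ := hF
  let X := LinearMap.eqLocus (g ∘ₗ LinearMap.fst R B F) (t ∘ₗ LinearMap.snd R B F)
  have hgf := hfg.exact.apply_apply_eq_zero
  have htu := hut.exact.apply_apply_eq_zero
  refine ⟨ModuleCat.of R X,
    ⟨(LinearMap.inl R B F ∘ₗ f).codRestrict X fun a => by simp [X, hgf],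
      LinearMap.snd R B F ∘ₗ X.subtype, fun a a' h => ?_, ?_, fun y => ?_⟩,
    ⟨(LinearMap.inr R B F ∘ₗ u).codRestrict X fun a => by simp [X, htu],
      LinearMap.fst R B F ∘ₗ X.subtype, fun a a' h => ?_, ?_, fun b => ?_⟩⟩
  · exact hfg.injective (congrArg (fun x : X => x.1.1) h)
  · rintro ⟨⟨b, y⟩, hx : g b = t y⟩
    constructor
    · rintro (rfl : y = 0)
      obtain ⟨a, rfl⟩ := (hfg.exact b).1 (hx.trans (map_zero t))
      exact ⟨a, rfl⟩
    · rintro ⟨a, ha⟩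
      exact (congrArg (fun x : X => x.1.2) ha).symm
  · obtain ⟨b, hb⟩ := hfg.surjective (t y)
    exact ⟨⟨(b, y), hb⟩, rfl⟩
  · exact hut.injective (congrArg (fun x : X => x.1.2) h)
  · rintro ⟨⟨b, y⟩, hx : g b = t y⟩
    constructor
    · rintro (rfl : b = 0)
      obtain ⟨a, rfl⟩ := (hut.exact y).1 (hx.symm.trans (map_zero g))
      exact ⟨a, rfl⟩
    · rintro ⟨a, ha⟩
      exact (congrArg (fun x : X => x.1.1) ha).symm
  · obtain ⟨y, hy⟩ := hut.surjective (g b)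
    exact ⟨⟨(b, y), hy.symm⟩, rfl⟩

theorem exists_horseshoe (hB : ShortExactSeq A B C) (hA : ShortExactSeq K F A) {p : P →ₗ[R] B}
    (hp : Function.Surjective p) : ∃ X Y : ModuleCat.{v} R,
      ShortExactSeq X (ModuleCat.of R (F × P)) B ∧ ShortExactSeq K X Y ∧ ShortExactSeq Y P C := by
  obtain ⟨f, g, hfg⟩ := hB
  obtain ⟨u, t, hut⟩ := hA
  have hgf := hfg.exact.apply_apply_eq_zero
  have htu := hut.exact.apply_apply_eq_zero
  let q : F × P →ₗ[R] B := (f ∘ₗ t).coprod p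
  have hq : Function.Surjective q := fun b => by
    obtain ⟨y, rfl⟩ := hp b
    exact ⟨(0, y), by simp [q]⟩
  have hker (x : F) (y : P) : (x, y) ∈ LinearMap.ker q ↔ f (t x) + p y = 0 := by simp [q]
  refine ⟨_, _, of_surjective (B := ModuleCat.of R (F × P)) q hq,
    ⟨(LinearMap.inl R F P ∘ₗ u).codRestrict _ fun c => (hker _ _).2 (by simp [htu]),
      (LinearMap.snd R F P ∘ₗ (LinearMap.ker q).subtype).codRestrict _ ?_, fun a a' h => ?_,
      ?_, ?_⟩, of_surjective (g ∘ₗ p) (hfg.surjective.comp hp)⟩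
  · rintro ⟨⟨x, y⟩, hxy⟩
    simpa [hgf] using congrArg g ((hker x y).1 hxy)
  · exact hut.injective (congrArg (fun z : LinearMap.ker q => z.1.1) h)
  · rintro ⟨⟨x, y⟩, hxy⟩
    constructor
    · intro h
      obtain rfl : y = 0 := congrArg Subtype.val h
      obtain ⟨c, rfl⟩ := (hut.exact x).1 (hfg.injective (by simpa using (hker x 0).1 hxy))
      exact ⟨c, rfl⟩
    · rintro ⟨c, hc⟩
      exact Subtype.ext (congrArg (fun z : LinearMap.ker q => z.1.2) hc).symm
  · rintro ⟨y, hy⟩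
    obtain ⟨a, ha⟩ := (hfg.exact (p y)).1 hy
    obtain ⟨x, rfl⟩ := hut.surjective a
    exact ⟨⟨(-x, y), (hker _ _).2 (by simp [ha])⟩, rfl⟩

end ShortExactSeq

end ShortExactSequences

section Filtrations

section FilteredBy

variable {R : Type u} [Ring R] {ι : Type*} {X : ι → ModuleCat.{v} R} {s t : Multiset ι}
  {A B C M N : ModuleCat.{v} R}

/-- `FilteredBy X s M`: the module `M` has a finite filtration whose sections are, up to
isomorphism and counted with multiplicity, the modules `X i` for `i` in the multiset `s`. The
classes `F(Δ)` and `F(∇)` are the cases `X = Q.std` and `X = Q.costd`. -/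
inductive FilteredBy (X : ι → ModuleCat.{v} R) : Multiset ι → ModuleCat.{v} R → Prop
  | zero (M : ModuleCat.{v} R) [Subsingleton M] : FilteredBy X 0 M
  | cons {i : ι} {s : Multiset ι} {M' M : ModuleCat.{v} R} (h : ShortExactSeq M' M (X i))
      (h' : FilteredBy X s M') : FilteredBy X (i ::ₘ s) M

namespace FilteredBy

theorem congr (h : FilteredBy X s M) (e : M ≃ₗ[R] N) : FilteredBy X s N := by
  cases h with
  | zero =>
    have := e.symm.injective.subsingleton
    exact .zero N
  | cons h h' => exact .cons (h.congr (.refl R _) e (.refl R _)) h'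

theorem singleton (X : ι → ModuleCat.{v} R) (i : ι) : FilteredBy X {i} (X i) :=
  .cons (.zero_left _) (.zero _)

theorem extension (h : ShortExactSeq A B C) (hA : FilteredBy X s A) (hC : FilteredBy X t C) :
    FilteredBy X (t + s) B := by
  induction hC generalizing B with
  | zero =>
    obtain ⟨e⟩ := h.nonempty_equiv_of_subsingleton_right
    simpa using hA.congr e
  | cons hC _ ih =>
    obtain ⟨B', hB', hB⟩ := h.exists_comap hC
    rw [Multiset.cons_add]
    exact .cons hB (ih hB')

theorem finite (hX : ∀ i, Module.Finite R (X i)) (h : FilteredBy X s M) : Module.Finite R M := by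
  induction h with
  | zero => infer_instance
  | cons h _ ih => exact h.finite_middle ih (hX _)

theorem eq_zero_of_forall {Z : Type*} [AddCommGroup Z] [Module R Z] (h : FilteredBy X s M)
    (hX : ∀ i ∈ s, ∀ φ : X i →ₗ[R] Z, φ = 0) (φ : M →ₗ[R] Z) : φ = 0 := by
  induction h with
  | zero => exact LinearMap.ext fun x => by rw [Subsingleton.elim x 0, map_zero, map_zero]
  | cons h _ ih =>
    obtain ⟨f, g, h⟩ := h
    have hφf := ih (fun i hi => hX i (Multiset.mem_cons_of_mem hi)) (φ ∘ₗ f)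
    obtain ⟨ψ, rfl⟩ := h.exists_desc φ hφf
    rw [hX _ (Multiset.mem_cons_self _ _) ψ, LinearMap.zero_comp]

end FilteredBy

end FilteredBy

variable {S : Type} [Ring S] {M M' N : ModuleCat.{0} S} {n : ℕ}

theorem filteredBy_of_monotone {ι : Type*} {X : ι → ModuleCat.{0} S}
    (f : Fin (n + 1) → Submodule S M) (g : Fin n → ι) (hf : Monotone f) (h0 : f 0 = ⊥)
    (hs : ∀ i : Fin n, Nonempty (subquot S (f i.castSucc) (f i.succ) ≃ₗ[S] X (g i))) :
    FilteredBy X (Finset.univ.val.map g) (ModuleCat.of S (f (Fin.last n))) := by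
  induction n with
  | zero =>
    have : Subsingleton (f (Fin.last 0)) := Submodule.subsingleton_iff_eq_bot.2 h0
    exact .zero _
  | succ n ih =>
    have hle : f (Fin.last n).castSucc ≤ f (Fin.last (n + 1)) := hf (Fin.le_last _)
    have htop : ShortExactSeq (ModuleCat.of S (f (Fin.last n).castSucc))
        (ModuleCat.of S (f (Fin.last (n + 1)))) (X (g (Fin.last n))) :=
      (ShortExactSeq.of_submodule (B := ModuleCat.of S (f (Fin.last (n + 1))))
        ((f (Fin.last n).castSucc).comap (f (Fin.last (n + 1))).subtype)).congr
        (Submodule.comapSubtypeEquivOfLe hle) (.refl S _) (hs (Fin.last n)).some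
    have hbot := ih (fun i => f i.castSucc) (fun i => g i.castSucc)
      (hf.comp Fin.strictMono_castSucc.monotone) h0 (fun i => hs i.castSucc)
    simp only [Fin.univ_castSuccEmb, Finset.cons_val, Finset.map_val, Multiset.map_cons,
      Multiset.map_map]
    exact .cons htop hbot

theorem HasFiltrationWithSections.filteredBy {ι : Type*} {X : ι → ModuleCat.{0} S}
    {f : Fin (n + 1) → Submodule S M} {g : Fin n → ι}
    (h : HasFiltrationWithSections S M n f fun i => X (g i)) :
    FilteredBy X (Finset.univ.val.map g) M := by
  obtain ⟨hf, h0, hlast, hs⟩ := h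
  have hM := filteredBy_of_monotone f g hf h0 hs
  rw [hlast] at hM
  exact hM.congr Submodule.topEquiv

theorem nonempty_subquot_map_equiv {u : M' →ₗ[S] M} (hu : Function.Injective u)
    (A B : Submodule S M') :
    Nonempty (subquot S (A.map u) (B.map u) ≃ₗ[S] subquot S A B) := by
  refine ⟨(Submodule.Quotient.equiv _ _ (Submodule.equivMapOfInjective u hu B) ?_).symm⟩
  ext ⟨_, x, hx, rfl⟩
  constructor
  · rintro ⟨y, hy, hyx⟩
    exact ⟨y, hy, congrArg Subtype.val hyx⟩
  · rintro ⟨y, hy, hyx⟩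
    exact ⟨⟨x, hx⟩, hu hyx ▸ hy, rfl⟩

theorem HasFiltrationWithSections.snoc {f : Fin (n + 1) → Submodule S M'}
    {D : Fin n → ModuleCat.{0} S} (h : HasFiltrationWithSections S M' n f D) {u : M' →ₗ[S] M}
    {q : M →ₗ[S] N} (huq : IsShortExact u q) :
    HasFiltrationWithSections S M (n + 1)
      (Fin.snoc (α := fun _ => Submodule S M) (fun i => (f i).map u) ⊤)
      (Fin.snoc (α := fun _ => ModuleCat.{0} S) D N) := by
  obtain ⟨hf, h0, hlast, hs⟩ := h
  refine ⟨Fin.monotone_iff_le_succ.2 fun i => ?_, ?_, Fin.snoc_last .., fun i => ?_⟩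
  · cases i using Fin.lastCases with
    | last => simp [Fin.succ_last]
    | cast i =>
      rw [Fin.succ_castSucc, Fin.snoc_castSucc, Fin.snoc_castSucc]
      exact Submodule.map_mono (hf i.castSucc_le_succ)
  · rw [← Fin.castSucc_zero, Fin.snoc_castSucc, h0, Submodule.map_bot]
  · cases i using Fin.lastCases with
    | last =>
      rw [Fin.snoc_castSucc, Fin.succ_last, Fin.snoc_last, Fin.snoc_last, hlast, Submodule.map_top]
      have hker : LinearMap.ker (q ∘ₗ (⊤ : Submodule S M).subtype) =
          (LinearMap.range u).comap (⊤ : Submodule S M).subtype := by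
        rw [LinearMap.ker_comp, huq.exact.linearMap_ker_eq]
      exact ⟨(Submodule.quotEquivOfEq _ _ hker.symm).trans
        (LinearMap.quotKerEquivOfSurjective _
          (huq.surjective.comp Submodule.topEquiv.surjective))⟩
    | cast i =>
      rw [Fin.succ_castSucc, Fin.snoc_castSucc, Fin.snoc_castSucc, Fin.snoc_castSucc]
      exact ⟨(nonempty_subquot_map_equiv huq.injective _ _).some.trans (hs i).some⟩

theorem exists_hasFiltrationWithSections_iff {ι : Type*} {X : ι → ModuleCat.{0} S} :
    (∃ (n : ℕ) (f : Fin (n + 1) → Submodule S M) (g : Fin n → ι),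
      HasFiltrationWithSections S M n f fun i => X (g i)) ↔ ∃ s, FilteredBy X s M := by
  refine ⟨fun ⟨n, f, g, h⟩ => ⟨_, h.filteredBy⟩, ?_⟩
  rintro ⟨s, h⟩
  induction h with
  | zero =>
    exact ⟨0, fun _ => ⊥, Fin.elim0, monotone_const, rfl, Subsingleton.elim _ _, fun i => i.elim0⟩
  | @cons i _ _ _ h _ ih =>
    obtain ⟨n, f, g, hf⟩ := ih
    obtain ⟨u, q, huq⟩ := h
    have hsnoc := hf.snoc huq
    rw [show Fin.snoc (α := fun _ => ModuleCat.{0} S) (fun j => X (g j)) (X i) =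
      fun j => X (Fin.snoc (α := fun _ => ι) g i j) from (Fin.comp_snoc X g i).symm] at hsnoc
    exact ⟨_, _, _, hsnoc⟩

variable {Λ : Type} [Fintype Λ] [PartialOrder Λ] {Q : QHData S Λ}

theorem inStdFilt_iff : InStdFilt S Q M ↔ ∃ s, FilteredBy Q.std s M :=
  exists_hasFiltrationWithSections_iff

theorem inCostdFilt_iff : InCostdFilt S Q M ↔ ∃ s, FilteredBy Q.costd s M :=
  exists_hasFiltrationWithSections_iff

theorem InStdFilt.congr (h : InStdFilt S Q M) (e : M ≃ₗ[S] N) : InStdFilt S Q N :=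
  inStdFilt_iff.2 ((inStdFilt_iff.1 h).imp fun _ hs => hs.congr e)

theorem InCostdFilt.congr (h : InCostdFilt S Q M) (e : M ≃ₗ[S] N) : InCostdFilt S Q N :=
  inCostdFilt_iff.2 ((inCostdFilt_iff.1 h).imp fun _ hs => hs.congr e)

end Filtrations

section Superfluous

variable {R M N X : Type*} [Ring R] [AddCommGroup M] [Module R M] [AddCommGroup N] [Module R N]
  [AddCommGroup X] [Module R X]

/-- `p` is an epimorphism with superfluous kernel, as in a projective cover: no proper submodule of
its source surjects onto its target. -/
structure IsSuperfluousEpi (p : M →ₗ[R] N) : Prop where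
  surjective : Function.Surjective p
  eq_top : ∀ K : Submodule R M, K.map p = ⊤ → K = ⊤

/-- `i` is an essential monomorphism, as in an injective hull: every nonzero submodule of its
target meets its range. -/
structure IsEssentialMono (i : N →ₗ[R] M) : Prop where
  injective : Function.Injective i
  eq_bot : ∀ K : Submodule R M, K.comap i = ⊥ → K = ⊥

namespace IsEssentialMono

variable {i : N →ₗ[R] M}

theorem injective_of_comp (hi : IsEssentialMono i) {f : M →ₗ[R] X}
    (h : Function.Injective (f ∘ₗ i)) : Function.Injective f :=
  LinearMap.ker_eq_bot.1 (hi.eq_bot _ ((LinearMap.ker_comp i f).symm.trans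
    (LinearMap.ker_eq_bot.2 h)))

theorem of_comp {f : M →ₗ[R] X} (h : IsEssentialMono (f ∘ₗ i)) (hf : Function.Injective f) :
    IsEssentialMono i := by
  refine ⟨.of_comp (f := f) h.injective, fun K hK => Submodule.map_injective_of_injective hf ?_⟩
  have hcomap : (K.map f).comap (f ∘ₗ i) = ⊥ := by
    rw [Submodule.comap_comp, Submodule.comap_map_eq_of_injective hf, hK]
  rw [h.eq_bot _ hcomap, Submodule.map_bot]

theorem comp_equiv (hi : IsEssentialMono i) (e : X ≃ₗ[R] N) :
    IsEssentialMono (i ∘ₗ e.toLinearMap) := by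
  refine ⟨hi.injective.comp e.injective, fun K hK => hi.eq_bot K ?_⟩
  exact Submodule.comap_injective_of_surjective e.surjective
    (hK.trans (LinearMap.ker_eq_bot.2 e.injective).symm)

end IsEssentialMono

theorem ne_zero_of_surjective [Nontrivial N] {f : M →ₗ[R] N} (hf : Function.Surjective f) :
    f ≠ 0 := by
  rintro rfl
  obtain ⟨y, hy⟩ := exists_ne (0 : N)
  obtain ⟨x, rfl⟩ := hf y
  exact hy rfl

namespace IsSuperfluousEpi

variable {p : M →ₗ[R] N}

theorem surjective_of_comp (hp : IsSuperfluousEpi p) {f : X →ₗ[R] M}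
    (h : Function.Surjective (p ∘ₗ f)) : Function.Surjective f :=
  LinearMap.range_eq_top.1 (hp.eq_top _ ((LinearMap.range_comp f p).symm.trans
    (LinearMap.range_eq_top.2 h)))

theorem of_comp {q : X →ₗ[R] M} (h : IsSuperfluousEpi (p ∘ₗ q)) (hq : Function.Surjective q) :
    IsSuperfluousEpi p := by
  refine ⟨.of_comp (g := q) h.surjective, fun K hK => Submodule.comap_injective_of_surjective hq ?_⟩
  have hmap : (K.comap q).map (p ∘ₗ q) = ⊤ := by
    rw [Submodule.map_comp, Submodule.map_comap_eq_of_surjective hq, hK]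
  rw [h.eq_top _ hmap, Submodule.comap_top]

theorem equiv_comp (hp : IsSuperfluousEpi p) (e : N ≃ₗ[R] X) :
    IsSuperfluousEpi (e.toLinearMap ∘ₗ p) := by
  refine ⟨e.surjective.comp hp.surjective, fun K hK => hp.eq_top K ?_⟩
  rw [Submodule.map_comp] at hK
  exact Submodule.map_injective_of_injective e.injective
    (hK.trans (Submodule.map_top _ |>.trans (LinearMap.range_eq_top.2 e.surjective)).symm)

section Simple

variable [IsSimpleModule R N]

theorem le_ker_of_ne_top (hp : IsSuperfluousEpi p) {K : Submodule R M} (hK : K ≠ ⊤) :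
    K ≤ LinearMap.ker p :=
  LinearMap.le_ker_iff_map.2 ((eq_bot_or_eq_top _).resolve_right fun h => hK (hp.eq_top K h))

theorem comp_eq_zero_or_surjective (hp : IsSuperfluousEpi p) (f : X →ₗ[R] M) :
    p ∘ₗ f = 0 ∨ Function.Surjective f := by
  refine or_iff_not_imp_right.2 fun hf => LinearMap.range_le_ker_iff.1 (hp.le_ker_of_ne_top ?_)
  rwa [Ne, LinearMap.range_eq_top]

theorem finite (hp : IsSuperfluousEpi p) : Module.Finite R M := by
  have := IsSimpleModule.nontrivial R N
  obtain ⟨y, hy⟩ := exists_ne (0 : N)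
  obtain ⟨x, rfl⟩ := hp.surjective y
  have hx : Submodule.span R {x} = ⊤ := by
    by_contra h
    exact hy (hp.le_ker_of_ne_top h (Submodule.mem_span_singleton_self x))
  exact ⟨⟨{x}, by rw [Finset.coe_singleton, hx]⟩⟩

variable [IsSimpleModule R X]

theorem ker_eq_of_ne_zero (hp : IsSuperfluousEpi p) {h : M →ₗ[R] X} (hh : h ≠ 0) :
    LinearMap.ker h = LinearMap.ker p := by
  have := IsSimpleModule.nontrivial R N
  have hcoatom := LinearMap.isCoatom_ker_of_surjective (LinearMap.surjective_of_ne_zero hh)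
  refine ((hcoatom.le_iff.1 (hp.le_ker_of_ne_top hcoatom.1)).resolve_left fun hker => ?_).symm
  exact ne_zero_of_surjective hp.surjective (LinearMap.ker_eq_top.1 hker)

theorem of_ne_zero (hp : IsSuperfluousEpi p) {h : M →ₗ[R] X} (hh : h ≠ 0) :
    IsSuperfluousEpi h := by
  have hsurj := LinearMap.surjective_of_ne_zero hh
  refine ⟨hsurj, fun K hK => hp.eq_top K ?_⟩
  have hsup : K ⊔ LinearMap.ker h = ⊤ := by
    rw [← Submodule.comap_map_eq, hK, Submodule.comap_top]
  rw [hp.ker_eq_of_ne_zero hh, ← Submodule.comap_map_eq] at hsup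
  exact Submodule.comap_injective_of_surjective hp.surjective
    (hsup.trans (Submodule.comap_top p).symm)

theorem nonempty_equiv_of_ne_zero (hp : IsSuperfluousEpi p) {h : M →ₗ[R] X} (hh : h ≠ 0) :
    Nonempty (X ≃ₗ[R] N) :=
  ⟨(h.quotKerEquivOfSurjective (LinearMap.surjective_of_ne_zero hh)).symm.trans
    ((Submodule.quotEquivOfEq _ _ (hp.ker_eq_of_ne_zero hh)).trans
      (p.quotKerEquivOfSurjective hp.surjective))⟩

end Simple

end IsSuperfluousEpi

end Superfluous

section CompositionFactors

variable {S : Type} [Ring S] {Λ : Type} [Fintype Λ] [PartialOrder Λ] {Q : QHData S Λ} {m n : Λ}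
  {A B C M : ModuleCat.{0} S}

instance (m : Λ) : IsSimpleModule S (Q.L m) := Q.simpleL m

instance (m : Λ) : Nontrivial (Q.L m) := IsSimpleModule.nontrivial S _

instance (m : Λ) : Module.Projective S (Q.P m) := (Q.projCover m).1

theorem QHData.exists_isSuperfluousEpi (Q : QHData S Λ) (m : Λ) :
    ∃ p : Q.P m →ₗ[S] Q.L m, IsSuperfluousEpi p := by
  obtain ⟨-, p, hp, htop⟩ := Q.projCover m
  exact ⟨p, hp, fun N hN => htop N (by rw [← Submodule.comap_map_eq, hN, Submodule.comap_top])⟩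

theorem IsCompFactor.of_injective {L : ModuleCat.{0} S} (h : IsCompFactor S L A)
    (f : A →ₗ[S] B) (hf : Function.Injective f) : IsCompFactor S L B := by
  obtain ⟨U, V, hUV, ⟨e⟩⟩ := h
  exact ⟨_, _, Submodule.map_mono hUV, ⟨(nonempty_subquot_map_equiv hf U V).some.trans e⟩⟩

theorem isCompFactor_iff : IsCompFactor S (Q.L m) M ↔ ∃ h : Q.P m →ₗ[S] M, h ≠ 0 := by
  obtain ⟨p, hp⟩ := Q.exists_isSuperfluousEpi m
  constructor
  · rintro ⟨A, B, -, ⟨e⟩⟩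
    obtain ⟨t, ht⟩ := Module.projective_lifting_property (Submodule.mkQ _) (e.symm ∘ₗ p)
      (Submodule.mkQ_surjective (A.comap B.subtype))
    refine ⟨B.subtype ∘ₗ t, fun h0 => ?_⟩
    obtain rfl : t = 0 := (LinearMap.cancel_left B.injective_subtype).1
      (h0.trans (LinearMap.comp_zero _).symm)
    rw [LinearMap.comp_zero] at ht
    exact ne_zero_of_surjective hp.surjective ((LinearMap.cancel_left e.symm.injective).1
      (ht.symm.trans (LinearMap.comp_zero _).symm))
  · rintro ⟨h, hh⟩
    have hker : LinearMap.ker h ≤ LinearMap.ker p :=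
      hp.le_ker_of_ne_top fun htop => hh (LinearMap.ker_eq_top.1 htop)
    let U := (LinearMap.ker p).map h
    let t := (U.comap (LinearMap.range h).subtype).mkQ ∘ₗ h.rangeRestrict
    have ht : Function.Surjective t :=
      (Submodule.mkQ_surjective _).comp h.surjective_rangeRestrict
    have hkt : LinearMap.ker t = LinearMap.ker p := by
      rw [LinearMap.ker_comp, Submodule.ker_mkQ, ← Submodule.comap_comp,
        LinearMap.subtype_comp_codRestrict, Submodule.comap_map_eq, sup_eq_left.2 hker]
    exact ⟨U, LinearMap.range h, LinearMap.map_le_range,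
      ⟨(t.quotKerEquivOfSurjective ht).symm.trans
        ((Submodule.quotEquivOfEq _ _ hkt).trans (p.quotKerEquivOfSurjective hp.surjective))⟩⟩

theorem IsCompFactor.of_surjective (h : IsCompFactor S (Q.L m) C) (g : B →ₗ[S] C)
    (hg : Function.Surjective g) : IsCompFactor S (Q.L m) B := by
  obtain ⟨φ, hφ⟩ := isCompFactor_iff.1 h
  obtain ⟨t, rfl⟩ := Module.projective_lifting_property g φ hg
  exact isCompFactor_iff.2 ⟨t, by rintro rfl; exact hφ (LinearMap.comp_zero g)⟩

theorem IsCompFactor.left_or_right (h : IsCompFactor S (Q.L m) B) (hB : ShortExactSeq A B C) :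
    IsCompFactor S (Q.L m) A ∨ IsCompFactor S (Q.L m) C := by
  obtain ⟨f, g, hfg⟩ := hB
  obtain ⟨φ, hφ⟩ := isCompFactor_iff.1 h
  by_cases h0 : g ∘ₗ φ = 0
  · obtain ⟨ψ, rfl⟩ := hfg.exists_lift φ h0
    exact .inl (isCompFactor_iff.2 ⟨ψ, by rintro rfl; exact hφ (LinearMap.comp_zero f)⟩)
  · exact .inr (isCompFactor_iff.2 ⟨_, h0⟩)

theorem IsCompFactor.exists_mem_of_filteredBy {ι : Type*} {X : ι → ModuleCat.{0} S}
    {s : Multiset ι} (h : IsCompFactor S (Q.L m) M) (hM : FilteredBy X s M) :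
    ∃ i ∈ s, IsCompFactor S (Q.L m) (X i) := by
  induction hM with
  | zero M =>
    obtain ⟨φ, hφ⟩ := isCompFactor_iff.1 h
    exact absurd (LinearMap.ext fun x => Subsingleton.elim _ _) hφ
  | @cons i s M' M hM _ ih =>
    rcases h.left_or_right hM with h | h
    · obtain ⟨j, hj, hjm⟩ := ih h
      exact ⟨j, Multiset.mem_cons_of_mem hj, hjm⟩
    · exact ⟨i, Multiset.mem_cons_self _ _, h⟩

theorem isCompFactor_simple_self (Q : QHData S Λ) (m : Λ) : IsCompFactor S (Q.L m) (Q.L m) := by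
  obtain ⟨p, hp⟩ := Q.exists_isSuperfluousEpi m
  exact isCompFactor_iff.2 ⟨p, ne_zero_of_surjective hp.surjective⟩

theorem eq_of_isCompFactor_simple (h : IsCompFactor S (Q.L m) (Q.L n)) : m = n := by
  obtain ⟨φ, hφ⟩ := isCompFactor_iff.1 h
  obtain ⟨p, hp⟩ := Q.exists_isSuperfluousEpi m
  by_contra hmn
  exact (Q.nonisoL n m (Ne.symm hmn)).false (hp.nonempty_equiv_of_ne_zero hφ).some

theorem le_of_isCompFactor_std (h : IsCompFactor S (Q.L m) (Q.std n)) : m ≤ n := by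
  obtain ⟨K, ⟨e⟩, hK, -⟩ := Q.stdSpec n
  exact hK m (h.of_injective (B := ModuleCat.of S (Q.P n ⧸ K)) e e.injective)

theorem le_of_isCompFactor_costd (h : IsCompFactor S (Q.L m) (Q.costd n)) : m ≤ n := by
  obtain ⟨V, ⟨e⟩, hV, -⟩ := Q.costdSpec n
  exact hV m (h.of_injective (B := ModuleCat.of S V) e e.injective)

end CompositionFactors

section StandardModules

theorem count_univ_map {ι : Type*} [DecidableEq ι] {n : ℕ} (g : Fin n → ι) (i : ι) :
    (Finset.univ.val.map g).count i = Nat.card {j : Fin n // g j = i} := by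
  simp only [Multiset.count_map, Nat.card_eq_fintype_card, Fintype.card_subtype, Finset.card,
    Finset.filter_val, eq_comm]

variable {S : Type} [Ring S] {Λ : Type} [Fintype Λ] [PartialOrder Λ] {Q : QHData S Λ} {m n : Λ}
  {M M' : ModuleCat.{0} S} {s : Multiset Λ}

theorem QHData.exists_projective_surjective_std (Q : QHData S Λ) (m : Λ) :
    ∃ q : Q.P m →ₗ[S] Q.std m, Function.Surjective q := by
  obtain ⟨K, ⟨e⟩, -, -⟩ := Q.stdSpec m
  exact ⟨e.symm ∘ₗ K.mkQ, e.symm.surjective.comp K.mkQ_surjective⟩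

theorem QHData.finite_std (Q : QHData S Λ) (m : Λ) : Module.Finite S (Q.std m) := by
  obtain ⟨p, hp⟩ := Q.exists_isSuperfluousEpi m
  obtain ⟨q, hq⟩ := Q.exists_projective_surjective_std m
  have := hp.finite
  exact .of_surjective q hq

theorem isCompFactor_of_std_hom {f : Q.std m →ₗ[S] M} (hf : f ≠ 0) : IsCompFactor S (Q.L m) M := by
  obtain ⟨q, hq⟩ := Q.exists_projective_surjective_std m
  exact isCompFactor_iff.2 ⟨f ∘ₗ q, fun h => hf ((LinearMap.cancel_right hq).1
    (h.trans (LinearMap.zero_comp q).symm))⟩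

theorem exists_filteredBy_simple_std [DecidableEq Λ] (Q : QHData S Λ) (m : Λ) :
    ∃ s : Multiset Λ, FilteredBy Q.L s (Q.std m) ∧ s.count m = 1 := by
  obtain ⟨n, f, hf, h0, hlast, hs, hcard⟩ := Q.multOne m
  choose g hg using fun i => Q.fullL (ModuleCat.of S (subquot S (f i.castSucc) (f i.succ))) (hs i)
  have hF : HasFiltrationWithSections S (Q.std m) n f fun i => Q.L (g i) := ⟨hf, h0, hlast, hg⟩
  refine ⟨_, hF.filteredBy, ?_⟩
  rw [count_univ_map, ← hcard]
  refine Nat.card_congr (Equiv.subtypeEquivRight fun i => ⟨?_, fun ⟨e⟩ => ?_⟩)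
  · rintro rfl
    exact hg i
  · by_contra hne
    exact (Q.nonisoL _ _ hne).false ((hg i).some.symm.trans e)

theorem exists_radical_std (Q : QHData S Λ) (m : Λ) :
    ∃ (R : ModuleCat.{0} S) (u : R →ₗ[S] Q.std m) (v : Q.std m →ₗ[S] Q.L m),
      IsShortExact u v ∧ IsSuperfluousEpi v ∧ ¬ IsCompFactor S (Q.L m) R := by
  classical
  obtain ⟨s, hs, hcount⟩ := exists_filteredBy_simple_std Q m
  obtain ⟨p, hp⟩ := Q.exists_isSuperfluousEpi m
  obtain ⟨q, hq⟩ := Q.exists_projective_surjective_std m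
  cases hs with
  | zero => simp at hcount
  | @cons j s R _ h hR =>
    obtain ⟨u, v, huv⟩ := h
    have hvq : v ∘ₗ q ≠ 0 := ne_zero_of_surjective (f := v ∘ₗ q) (huv.surjective.comp hq)
    obtain rfl : m = j := eq_of_isCompFactor_simple (isCompFactor_iff.2 ⟨_, hvq⟩)
    refine ⟨R, u, v, huv, (hp.of_ne_zero hvq).of_comp hq, fun hmR => ?_⟩
    obtain ⟨i, hi, hmi⟩ := hmR.exists_mem_of_filteredBy hR
    obtain rfl := eq_of_isCompFactor_simple hmi
    rw [Multiset.count_cons_self, Nat.add_eq_right, Multiset.count_eq_zero] at hcount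
    exact hcount hi

theorem isCompFactor_std_self (Q : QHData S Λ) (m : Λ) : IsCompFactor S (Q.L m) (Q.std m) := by
  obtain ⟨R, u, v, huv, -⟩ := exists_radical_std Q m
  exact (isCompFactor_simple_self Q m).of_surjective v huv.surjective

theorem std_hom_surjective_of_ne_zero {f : Q.std m →ₗ[S] Q.std m} (hf : f ≠ 0) :
    Function.Surjective f := by
  obtain ⟨R, u, v, huv, hv, hR⟩ := exists_radical_std Q m
  refine (hv.comp_eq_zero_or_surjective f).resolve_left fun hvf => ?_
  obtain ⟨ψ, rfl⟩ := huv.exists_lift f hvf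
  exact hR (isCompFactor_of_std_hom (f := ψ) (by rintro rfl; exact hf (LinearMap.comp_zero u)))

theorem std_hom_bijective_of_ne_zero [IsNoetherianRing S] {f : Q.std m →ₗ[S] Q.std m}
    (hf : f ≠ 0) : Function.Bijective f := by
  have := Q.finite_std m
  have hsurj := std_hom_surjective_of_ne_zero hf
  exact ⟨IsNoetherian.injective_of_surjective_endomorphism f hsurj, hsurj⟩

theorem exists_projective_ker_std (Q : QHData S Λ) (m : Λ) :
    ∃ (K : ModuleCat.{0} S) (s : Multiset Λ), ShortExactSeq K (Q.P m) (Q.std m) ∧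
      FilteredBy Q.std s K ∧ ∀ j ∈ s, m < j := by
  classical
  obtain ⟨n, f, g, hF, hle, hcount⟩ := Q.projFilt m
  have hP := hF.filteredBy
  have hle : ∀ j ∈ Finset.univ.val.map g, m ≤ j := by simpa using hle
  rw [← count_univ_map] at hcount
  generalize Finset.univ.val.map g = s at hP hcount hle
  cases hP with
  | zero => simp at hcount
  | @cons j s K _ h hK =>
    obtain ⟨u, v, huv⟩ := h
    obtain ⟨_, _, w, hw, -⟩ := exists_radical_std Q j
    obtain rfl : m = j := eq_of_isCompFactor_simple (isCompFactor_iff.2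
      ⟨w ∘ₗ v, ne_zero_of_surjective (f := w ∘ₗ v) (hw.surjective.comp huv.surjective)⟩)
    refine ⟨K, s, ⟨u, v, huv⟩, hK, fun j hj => (hle j (Multiset.mem_cons_of_mem hj)).lt_of_ne ?_⟩
    rintro rfl
    rw [Multiset.count_cons_self, Nat.add_eq_right, Multiset.count_eq_zero] at hcount
    exact hcount hj

theorem exists_section_of_surjective_std {f : M' →ₗ[S] M} {g : M →ₗ[S] Q.std n}
    (h : IsShortExact f g) (hM' : FilteredBy Q.std s M') (hs : ∀ j ∈ s, ¬ n < j) :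
    ∃ t : Q.std n →ₗ[S] M, g ∘ₗ t = LinearMap.id := by
  obtain ⟨K, sK, ⟨u, v, huv⟩, hK, hlt⟩ := exists_projective_ker_std Q n
  obtain ⟨l, rfl⟩ := Module.projective_lifting_property g v h.surjective
  obtain ⟨w, hw⟩ := h.exists_lift (l ∘ₗ u)
    (by rw [← LinearMap.comp_assoc, huv.exact.linearMap_comp_eq_zero])
  have hw0 : w = 0 := by
    refine hK.eq_zero_of_forall (fun j hj φ => ?_) w
    by_contra hφ
    obtain ⟨i, hi, hji⟩ := (isCompFactor_of_std_hom hφ).exists_mem_of_filteredBy hM'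
    exact hs i hi ((hlt j hj).trans_le (le_of_isCompFactor_std hji))
  obtain ⟨t, ht⟩ := huv.exists_desc l (by rw [← hw, hw0, LinearMap.comp_zero])
  exact ⟨t, (LinearMap.cancel_right huv.surjective).1 (by rw [LinearMap.comp_assoc, ht]; rfl)⟩

theorem FilteredBy.exists_std_submodule (h : FilteredBy Q.std s M) (hn : n ∈ s)
    (hmax : ∀ j ∈ s, ¬ n < j) :
    ∃ (t : Multiset Λ) (N : ModuleCat.{0} S), s = n ::ₘ t ∧ ShortExactSeq (Q.std n) M N ∧
      FilteredBy Q.std t N := by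
  induction h with
  | zero => simp at hn
  | @cons j s M' M hM hM' ih =>
    have hmax' : ∀ i ∈ s, ¬ n < i := fun i hi => hmax i (Multiset.mem_cons_of_mem hi)
    by_cases hns : n ∈ s
    · obtain ⟨t, N', rfl, hN', ht⟩ := ih hns hmax'
      obtain ⟨N, hN, hNj⟩ := hN'.exists_quotient hM
      exact ⟨j ::ₘ t, N, Multiset.cons_swap _ _ _, hN, .cons hNj ht⟩
    · obtain rfl : n = j := (Multiset.mem_cons.1 hn).resolve_right hns
      obtain ⟨f, g, hfg⟩ := hM
      obtain ⟨t, ht⟩ := exists_section_of_surjective_std hfg hM' hmax'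
      exact ⟨s, M', rfl, .swap_of_section hfg ht, hM'⟩

end StandardModules

section StandardFiltrations

variable {S : Type} [Ring S] {Λ : Type} [Fintype Λ] [PartialOrder Λ] {Q : QHData S Λ} {m : Λ}
  {A B C M : ModuleCat.{0} S}

theorem exists_filteredBy_ker_std [IsNoetherianRing S] {s : Multiset Λ}
    (hB : FilteredBy Q.std s B) {g : B →ₗ[S] Q.std m} (hg : Function.Surjective g) :
    ∃ t, FilteredBy Q.std t (ModuleCat.of S (LinearMap.ker g)) := by
  classical
  induction s using Multiset.strongInductionOn generalizing B with
  | ih s ih =>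
    obtain ⟨j, hj, hmj⟩ :=
      ((isCompFactor_std_self Q m).of_surjective g hg).exists_mem_of_filteredBy hB
    obtain ⟨n, hjn, hn⟩ := s.toFinset.exists_le_maximal (Multiset.mem_toFinset.2 hj)
    obtain ⟨s', N, rfl, ⟨u, v, huv⟩, hN⟩ :=
      hB.exists_std_submodule (Multiset.mem_toFinset.1 hn.prop)
        fun i hi => hn.not_gt (Multiset.mem_toFinset.2 hi)
    by_cases h0 : g ∘ₗ u = 0
    · obtain ⟨g', rfl⟩ := huv.exists_desc g h0
      obtain ⟨t, ht⟩ := ih s' (Multiset.lt_cons_self _ _) hN (g := g') (.of_comp (g := v) hg)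
      have hker : ShortExactSeq (Q.std n) (ModuleCat.of S (LinearMap.ker (g' ∘ₗ v)))
          (ModuleCat.of S (LinearMap.ker g')) := huv.exists_ker_comp g'
      exact ⟨_, .extension hker (.singleton _ n) ht⟩
    · obtain rfl : n = m := (le_of_isCompFactor_std (isCompFactor_of_std_hom h0)).antisymm
        ((le_of_isCompFactor_std hmj).trans hjn)
      obtain ⟨e⟩ := huv.nonempty_ker_equiv_of_bijective_comp (std_hom_bijective_of_ne_zero h0)
      exact ⟨s', hN.congr e.symm⟩

theorem InStdFilt.extension (h : ShortExactSeq A B C) (hA : InStdFilt S Q A)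
    (hC : InStdFilt S Q C) : InStdFilt S Q B := by
  obtain ⟨s, hA⟩ := inStdFilt_iff.1 hA
  obtain ⟨t, hC⟩ := inStdFilt_iff.1 hC
  exact inStdFilt_iff.2 ⟨_, .extension h hA hC⟩

theorem InStdFilt.left [IsNoetherianRing S] (h : ShortExactSeq A B C) (hB : InStdFilt S Q B)
    (hC : InStdFilt S Q C) : InStdFilt S Q A := by
  rw [inStdFilt_iff] at hB hC ⊢
  obtain ⟨s, hC⟩ := hC
  induction hC generalizing A B with
  | zero =>
    obtain ⟨e⟩ := h.nonempty_equiv_of_subsingleton_right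
    exact hB.imp fun _ hs => hs.congr e.symm
  | cons hC _ ih =>
    obtain ⟨B', hB', f, g, hfg⟩ := h.exists_comap hC
    obtain ⟨t, ht⟩ := hB
    refine ih hB' ((exists_filteredBy_ker_std ht hfg.surjective).imp fun _ hs => hs.congr ?_)
    exact (LinearEquiv.ofEq _ _ hfg.exact.linearMap_ker_eq).trans
      (LinearEquiv.ofInjective f hfg.injective).symm

theorem inStdFilt_std (Q : QHData S Λ) (m : Λ) : InStdFilt S Q (Q.std m) :=
  inStdFilt_iff.2 ⟨_, .singleton _ m⟩

theorem inStdFilt_projective (Q : QHData S Λ) (m : Λ) : InStdFilt S Q (Q.P m) :=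
  Q.projFilt m |>.imp fun _ ⟨f, g, h, _⟩ => ⟨f, g, h⟩

theorem InStdFilt.finite (h : InStdFilt S Q M) : Module.Finite S M := by
  obtain ⟨s, hs⟩ := inStdFilt_iff.1 h
  exact hs.finite Q.finite_std

theorem exists_filteredBy_simple_of_isFiniteLength (Q : QHData S Λ) {M : Type} [AddCommGroup M]
    [Module S M] (h : IsFiniteLength S M) : ∃ s, FilteredBy Q.L s (ModuleCat.of S M) ∧
      ∀ j ∈ s, IsCompFactor S (Q.L j) (ModuleCat.of S M) := by
  induction h with
  | of_subsingleton => exact ⟨0, .zero _, by simp⟩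
  | @of_simple_quotient M _ _ N hN _ ih =>
    obtain ⟨s, hs, hcf⟩ := ih
    obtain ⟨m, ⟨e⟩⟩ := Q.fullL (ModuleCat.of S (M ⧸ N)) hN
    obtain ⟨f, g, hfg⟩ := (ShortExactSeq.of_submodule (B := ModuleCat.of S M) N).congr
      (.refl S _) (.refl S _) e
    refine ⟨m ::ₘ s, .cons ⟨f, g, hfg⟩ hs, fun j hj => ?_⟩
    rcases Multiset.mem_cons.1 hj with rfl | hj
    · exact (isCompFactor_simple_self Q j).of_surjective g hfg.surjective
    · exact (hcf j hj).of_injective f hfg.injective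

theorem exists_filteredBy_simple [IsArtinianRing S] (Q : QHData S Λ) (M : ModuleCat.{0} S)
    [Module.Finite S M] : ∃ s, FilteredBy Q.L s M ∧ ∀ j ∈ s, IsCompFactor S (Q.L j) M :=
  exists_filteredBy_simple_of_isFiniteLength Q
    (isFiniteLength_iff_isNoetherian_isArtinian.2 ⟨inferInstance, inferInstance⟩)

theorem FilteredBy.exists_inStdFilt_surjective {s : Multiset Λ} (h : FilteredBy Q.L s M) :
    ∃ (F : ModuleCat.{0} S) (p : F →ₗ[S] M), InStdFilt S Q F ∧ Function.Surjective p := by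
  induction h with
  | zero M => exact ⟨M, LinearMap.id, inStdFilt_iff.2 ⟨0, .zero M⟩, Function.surjective_id⟩
  | @cons m _ M' M h _ ih =>
    obtain ⟨F, q, hF, hq⟩ := ih
    obtain ⟨f, g, hfg⟩ := h
    obtain ⟨p, hp⟩ := Q.exists_isSuperfluousEpi m
    obtain ⟨t, rfl⟩ := Module.projective_lifting_property g p hfg.surjective
    refine ⟨ModuleCat.of S (F × Q.P m), (f ∘ₗ q).coprod t,
      .extension (.prod _ _) hF (inStdFilt_projective Q m), fun y => ?_⟩
    obtain ⟨x, hx : g (t x) = g y⟩ := hp.surjective (g y)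
    obtain ⟨a, ha⟩ := (hfg.exact (y - t x)).1 (by rw [map_sub, hx, sub_self])
    obtain ⟨b, rfl⟩ := hq a
    exact ⟨(b, x), by simp [ha]⟩

end StandardFiltrations

section ResolutionDimension

variable {R : Type u} [Ring R]

/-- A class of finitely generated modules is resolving if every finitely generated module is a
quotient of one of its members and if it is closed under extensions and kernels of epimorphisms.
This is what the theory of resolution dimension requires of `F(Δ)`. -/
structure IsResolving (P : ModuleCat.{v} R → Prop) : Prop where
  finite : ∀ {M}, P M → Module.Finite R M
  extension : ∀ {A B C : ModuleCat.{v} R}, ShortExactSeq A B C → P A → P C → P B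
  left : ∀ {A B C : ModuleCat.{v} R}, ShortExactSeq A B C → P B → P C → P A
  exists_surjective : ∀ M : ModuleCat.{v} R, Module.Finite R M →
    ∃ (F : ModuleCat.{v} R) (p : F →ₗ[R] M), P F ∧ Function.Surjective p

/-- `ResDimLE P d M`: the module `M` has a resolution `0 → F_d → ⋯ → F_0 → M → 0` of length `d` by
modules satisfying `P`, built up one syzygy at a time. -/
def ResDimLE (P : ModuleCat.{v} R → Prop) : ℕ → ModuleCat.{v} R → Prop
  | 0, M => P M
  | d + 1, M => ∃ K F, ShortExactSeq K F M ∧ P F ∧ ResDimLE P d K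

variable {P : ModuleCat.{v} R → Prop} {A B C F M N : ModuleCat.{v} R} {d e : ℕ}

theorem IsResolving.of_subsingleton (hP : IsResolving P) (M : ModuleCat.{v} R) [Subsingleton M] :
    P M := by
  obtain ⟨F, -, hF, -⟩ := hP.exists_surjective (ModuleCat.of R PUnit) inferInstance
  exact hP.left ((ShortExactSeq.zero_left F).congr 0 (.refl R _) (.refl R _)) hF hF

theorem IsResolving.congr (hP : IsResolving P) (hM : P M) (e : M ≃ₗ[R] N) : P N :=
  hP.extension ((ShortExactSeq.zero_right M).congr (.refl R _) e (.refl R _)) hM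
    (hP.of_subsingleton _)

namespace ResDimLE

theorem congr (hP : IsResolving P) (h : ResDimLE P d M) (e : M ≃ₗ[R] N) : ResDimLE P d N := by
  cases d with
  | zero => exact hP.congr h e
  | succ d =>
    obtain ⟨K, F, hM, hF, hK⟩ := h
    exact ⟨K, F, hM.congr (.refl R _) (.refl R _) e, hF, hK⟩

theorem finite (hP : IsResolving P) (h : ResDimLE P d M) : Module.Finite R M := by
  cases d with
  | zero => exact hP.finite h
  | succ d =>
    obtain ⟨K, F, hM, hF, -⟩ := h
    exact hM.finite_right (hP.finite hF)

theorem succ (hP : IsResolving P) (h : ResDimLE P d M) : ResDimLE P (d + 1) M := by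
  induction d generalizing M with
  | zero => exact ⟨_, M, .zero_left M, h, hP.of_subsingleton _⟩
  | succ d ih =>
    obtain ⟨K, F, hM, hF, hK⟩ := h
    exact ⟨K, F, hM, hF, ih hK⟩

theorem mono (hP : IsResolving P) (hde : d ≤ e) (h : ResDimLE P d M) : ResDimLE P e M := by
  induction hde with
  | refl => exact h
  | step _ ih => exact ih.succ hP

theorem of_mem (hP : IsResolving P) (h : P M) : ResDimLE P d M :=
  mono (d := 0) hP (Nat.zero_le d) h

theorem left_of_mem (hP : IsResolving P) (h : ShortExactSeq A B F) (hB : ResDimLE P d B)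
    (hF : P F) : ResDimLE P d A := by
  cases d with
  | zero => exact hP.left h hB hF
  | succ d =>
    obtain ⟨K, F', hB, hF', hK⟩ := hB
    obtain ⟨A', hA, hA'⟩ := hB.exists_comap h
    exact ⟨K, A', hA, hP.left hA' hF' hF, hK⟩

theorem extension (hP : IsResolving P) (h : ShortExactSeq A B C) (hA : ResDimLE P d A)
    (hC : ResDimLE P d C) : ResDimLE P d B := by
  induction d generalizing A B C with
  | zero => exact hP.extension h hA hC
  | succ d ih =>
    have hBfin := h.finite_middle (hA.finite hP) (hC.finite hP)
    obtain ⟨KA, FA, hA, hFA, hKA⟩ := hA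
    obtain ⟨KC, FC, hC, hFC, hKC⟩ := hC
    obtain ⟨FB, p, hFB, hp⟩ := hP.exists_surjective B hBfin
    obtain ⟨KB, Y, hB, hKB, hY⟩ := h.exists_horseshoe hA hp
    obtain ⟨X, hYX, hKX⟩ := hY.exists_pullback hC
    have hXdim : ResDimLE P d X := ih hKX hKC (of_mem hP hFB)
    have hYdim : ResDimLE P d Y := left_of_mem hP hYX hXdim hFC
    exact ⟨KB, _, hB, hP.extension (.prod _ _) hFA hFB, ih hKB hKA hYdim⟩

theorem left (hP : IsResolving P) (h : ShortExactSeq A B C) (hB : ResDimLE P d B)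
    (hC : ResDimLE P (d + 1) C) : ResDimLE P d A := by
  obtain ⟨K, F, hC, hF, hK⟩ := hC
  obtain ⟨X, hAX, hKX⟩ := h.exists_pullback hC
  exact left_of_mem hP hAX (extension hP hKX hK hB) hF

theorem of_filteredBy {ι : Type*} {X : ι → ModuleCat.{v} R} {s : Multiset ι} (hP : IsResolving P)
    (hM : FilteredBy X s M) (hX : ∀ i ∈ s, ResDimLE P d (X i)) : ResDimLE P d M := by
  induction hM with
  | zero M => exact of_mem hP (hP.of_subsingleton M)
  | cons h _ ih =>
    exact extension hP h (ih fun i hi => hX i (Multiset.mem_cons_of_mem hi))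
      (hX _ (Multiset.mem_cons_self _ _))

end ResDimLE

end ResolutionDimension

section StandardResolutions

variable {S : Type} [Ring S] [IsArtinianRing S] {Λ : Type} [Fintype Λ] [PartialOrder Λ]
  {Q : QHData S Λ} {M : ModuleCat.{0} S} {d : ℕ}

theorem isResolving_inStdFilt (Q : QHData S Λ) : IsResolving (InStdFilt S Q) where
  finite := InStdFilt.finite
  extension := InStdFilt.extension
  left := InStdFilt.left
  exists_surjective _ _ :=
    let ⟨_, hs, _⟩ := exists_filteredBy_simple Q _
    hs.exists_inStdFilt_surjective

theorem resDimLE_of_isCompFactor [Module.Finite S M]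
    (h : ∀ j, IsCompFactor S (Q.L j) M → ResDimLE (InStdFilt S Q) d (Q.L j)) :
    ResDimLE (InStdFilt S Q) d M := by
  obtain ⟨s, hs, hcf⟩ := exists_filteredBy_simple Q M
  exact .of_filteredBy (isResolving_inStdFilt Q) hs fun j hj => h j (hcf j hj)

theorem exists_resDimLE_simple (Q : QHData S Λ) (m : Λ) :
    ∃ d, ResDimLE (InStdFilt S Q) d (Q.L m) := by
  induction m using WellFoundedLT.induction with
  | ind m ih =>
    choose! d hd using ih
    obtain ⟨R, u, v, huv, -, hR⟩ := exists_radical_std Q m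
    have hlt (j : Λ) (hj : IsCompFactor S (Q.L j) R) : j < m :=
      (le_of_isCompFactor_std (hj.of_injective u huv.injective)).lt_of_ne
        (by rintro rfl; exact hR hj)
    have hrad : ShortExactSeq R (Q.std m) (Q.L m) := ⟨u, v, huv⟩
    have := hrad.finite_left (Q.finite_std m)
    refine ⟨Finset.univ.sup d + 1, R, Q.std m, hrad, inStdFilt_std Q m,
      resDimLE_of_isCompFactor fun j hj => ?_⟩
    exact (hd j (hlt j hj)).mono (isResolving_inStdFilt Q) (Finset.le_sup (Finset.mem_univ j))

theorem exists_resDimLE (Q : QHData S Λ) (M : ModuleCat.{0} S) [Module.Finite S M] :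
    ∃ d, ResDimLE (InStdFilt S Q) d M := by
  choose d hd using exists_resDimLE_simple Q
  exact ⟨Finset.univ.sup d, resDimLE_of_isCompFactor fun j _ =>
    (hd j).mono (isResolving_inStdFilt Q) (Finset.le_sup (Finset.mem_univ j))⟩

end StandardResolutions

section ExactSequences

section Recursive

variable {R : Type u} [Ring R] {P : ModuleCat.{v} R → Prop} {M F X Y Z : ModuleCat.{v} R} {d : ℕ}

/-- `CoresDimLE P d M`: the module `M` has a coresolution `0 → M → F_0 → ⋯ → F_d → 0` of length `d`
by modules satisfying `P`, built up one cosyzygy at a time. -/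
def CoresDimLE (P : ModuleCat.{v} R → Prop) : ℕ → ModuleCat.{v} R → Prop
  | 0, M => P M
  | d + 1, M => ∃ F C, ShortExactSeq M F C ∧ P F ∧ CoresDimLE P d C

theorem CoresDimLE.congr (hP : ∀ {A B : ModuleCat.{v} R}, P A → (A ≃ₗ[R] B) → P B)
    (h : CoresDimLE P d M) (e : M ≃ₗ[R] X) : CoresDimLE P d X := by
  cases d with
  | zero => exact hP h e
  | succ d =>
    obtain ⟨F, C, hM, hF, hC⟩ := h
    exact ⟨F, C, hM.congr e (.refl R _) (.refl R _), hF, hC⟩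

/-- `ExactSeqVia P d X Y`: there is an exact sequence `0 → X → F_1 → ⋯ → F_d → Y → 0` whose middle
terms satisfy `P`, given as a splice of short exact sequences; for `d = 0` it is an isomorphism. It
mediates between `IsExactSeq` and the recursive `ResDimLE` and `CoresDimLE`. -/
def ExactSeqVia (P : ModuleCat.{v} R → Prop) : ℕ → ModuleCat.{v} R → ModuleCat.{v} R → Prop
  | 0, X, Y => Nonempty (X ≃ₗ[R] Y)
  | d + 1, X, Y => ∃ F Z, ShortExactSeq X F Z ∧ P F ∧ ExactSeqVia P d Z Y

theorem ExactSeqVia.congr_left (h : ExactSeqVia P d X Y) (e : X ≃ₗ[R] Z) :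
    ExactSeqVia P d Z Y := by
  cases d with
  | zero => exact h.map e.symm.trans
  | succ d =>
    obtain ⟨F, W, hX, hF, hW⟩ := h
    exact ⟨F, W, hX.congr e (.refl R _) (.refl R _), hF, hW⟩

theorem exactSeqVia_succ_iff :
    ExactSeqVia P (d + 1) X Y ↔ ∃ F Z, ExactSeqVia P d X Z ∧ P F ∧ ShortExactSeq Z F Y := by
  induction d generalizing X with
  | zero =>
    constructor
    · rintro ⟨F, Z, h, hF, ⟨e⟩⟩
      exact ⟨F, X, ⟨.refl R X⟩, hF, h.congr (.refl R _) (.refl R _) e⟩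
    · rintro ⟨F, Z, ⟨e⟩, hF, h⟩
      exact ⟨F, Y, h.congr e.symm (.refl R _) (.refl R _), hF, ⟨.refl R Y⟩⟩
  | succ d ih =>
    constructor
    · rintro ⟨F, Z, hX, hF, hZ⟩
      obtain ⟨F', Z', hZ, hF', hY⟩ := ih.1 hZ
      exact ⟨F', Z', ⟨F, Z, hX, hF, hZ⟩, hF', hY⟩
    · rintro ⟨F', Z', ⟨F, Z, hX, hF, hZ⟩, hF', hY⟩
      exact ⟨F, Z, hX, hF, ih.2 ⟨F', Z', hZ, hF', hY⟩⟩

theorem coresDimLE_iff_exactSeqVia (hP : ∀ {A B : ModuleCat.{v} R}, P A → (A ≃ₗ[R] B) → P B) :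
    CoresDimLE P d M ↔ ∃ K, P K ∧ ExactSeqVia P d M K := by
  induction d generalizing M with
  | zero => exact ⟨fun h => ⟨M, h, ⟨.refl R M⟩⟩, fun ⟨_, hK, ⟨e⟩⟩ => hP hK e.symm⟩
  | succ d ih =>
    simp only [CoresDimLE, ExactSeqVia, ih]
    grind

theorem resDimLE_iff_exactSeqVia (hP : ∀ {A B : ModuleCat.{v} R}, P A → (A ≃ₗ[R] B) → P B) :
    ResDimLE P d M ↔ ∃ K, P K ∧ ExactSeqVia P d K M := by
  induction d generalizing M with
  | zero => exact ⟨fun h => ⟨M, h, ⟨.refl R M⟩⟩, fun ⟨_, hK, ⟨e⟩⟩ => hP hK e⟩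
  | succ d ih =>
    simp only [ResDimLE, exactSeqVia_succ_iff, ih]
    grind

end Recursive

section Indexed

variable {S : Type} [Ring S] {P : ModuleCat.{0} S → Prop} {X Y : ModuleCat.{0} S} {d : ℕ}

theorem IsExactSeq.exactSeqVia {N : Fin (d + 2) → ModuleCat.{0} S}
    {f : ∀ i : Fin (d + 1), N i.castSucc →ₗ[S] N i.succ} (h : IsExactSeq S d N f)
    (hP : ∀ i : Fin d, P (N i.castSucc.succ)) : ExactSeqVia P d (N 0) (N (Fin.last (d + 1))) := by
  obtain ⟨hinj, hsurj, hex⟩ := h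
  have hrange (e i : ℕ) (hi : i + e = d) :
      ExactSeqVia P e (ModuleCat.of S (LinearMap.range (f ⟨i, by omega⟩)))
        (N (Fin.last (d + 1))) := by
    induction e generalizing i with
    | zero =>
      obtain rfl : i = d := hi
      exact ⟨.ofTop _ (LinearMap.range_eq_top.2 hsurj)⟩
    | succ e ih =>
      have hi' : i < d := by omega
      have hker : LinearMap.ker (f (Fin.succ ⟨i, hi'⟩)).rangeRestrict =
          LinearMap.range (f (Fin.castSucc ⟨i, hi'⟩)) :=
        (LinearMap.ker_rangeRestrict _).trans (hex ⟨i, hi'⟩).symm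
      have hses := ShortExactSeq.of_surjective (B := N (Fin.castSucc ⟨i, hi'⟩).succ)
        (C := ModuleCat.of S (LinearMap.range (f (Fin.succ ⟨i, hi'⟩))))
        (f (Fin.succ ⟨i, hi'⟩)).rangeRestrict (LinearMap.surjective_rangeRestrict _)
      exact ⟨_, _, hses.congr (.ofEq _ _ hker) (.refl S _) (.refl S _), hP ⟨i, hi'⟩,
        ih (i + 1) (by omega)⟩
  exact (hrange d 0 (Nat.zero_add d)).congr_left (LinearEquiv.ofInjective _ hinj).symm

theorem ExactSeqVia.exists_isExactSeq (h : ExactSeqVia P d X Y) :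
    ∃ (N : Fin (d + 2) → ModuleCat.{0} S) (f : ∀ i : Fin (d + 1), N i.castSucc →ₗ[S] N i.succ),
      IsExactSeq S d N f ∧ N 0 = X ∧ N (Fin.last (d + 1)) = Y ∧
        ∀ i : Fin d, P (N i.castSucc.succ) := by
  induction d generalizing X with
  | zero =>
    obtain ⟨e⟩ := h
    exact ⟨![X, Y], fun | 0 => e.toLinearMap, ⟨e.injective, e.surjective, nofun⟩, rfl, rfl, nofun⟩
  | succ d ih =>
    obtain ⟨F, Z, ⟨u, v, huv⟩, hF, hZ⟩ := h
    obtain ⟨N, f, ⟨hinj, hsurj, hex⟩, rfl, rfl, hN⟩ := ih hZ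
    let N' : Fin (d + 3) → ModuleCat.{0} S := Fin.cons X (Fin.cons F (Fin.tail N))
    let f' : ∀ i : Fin (d + 2), N' i.castSucc →ₗ[S] N' i.succ :=
      Fin.cases u (Fin.cases (f 0 ∘ₗ v) fun i => f i.succ)
    refine ⟨N', f', ⟨huv.injective, ?_, ?_⟩, rfl, rfl, ?_⟩
    · cases d with
      | zero => exact hsurj.comp huv.surjective
      | succ d => exact hsurj
    · refine Fin.cases ?_ fun i => ?_
      · have h0 : LinearMap.range u = LinearMap.ker (f 0 ∘ₗ v) :=
          huv.exact.linearMap_ker_eq.symm.trans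
            (LinearMap.ker_comp_of_ker_eq_bot v (LinearMap.ker_eq_bot.2 hinj)).symm
        exact h0
      · cases d with
        | zero => exact i.elim0
        | succ d =>
          induction i using Fin.cases with
          | zero =>
            have h1 : LinearMap.range (f 0 ∘ₗ v) = LinearMap.ker (f 1) :=
              (LinearMap.range_comp_of_range_eq_top _
                (LinearMap.range_eq_top.2 huv.surjective)).trans (hex 0)
            exact h1
          | succ i => exact hex i.succ
    · exact Fin.cases hF hN

variable {Λ : Type} [Fintype Λ] [PartialOrder Λ] {Q : QHData S Λ} {M : ModuleCat.{0} S}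

theorem wfdLE_iff : WfdLE S Q M d ↔ ResDimLE (InStdFilt S Q) d M := by
  rw [resDimLE_iff_exactSeqVia .congr]
  constructor
  · rintro ⟨N, f, hf, rfl, hN⟩
    exact ⟨N 0, hN 0, hf.exactSeqVia fun i => hN i.succ⟩
  · rintro ⟨K, hK, h⟩
    obtain ⟨N, f, hf, rfl, hM, hN⟩ := h.exists_isExactSeq
    exact ⟨N, f, hf, hM, Fin.cases hK hN⟩

theorem gfdLE_iff : GfdLE S Q M d ↔ CoresDimLE (InCostdFilt S Q) d M := by
  rw [coresDimLE_iff_exactSeqVia .congr]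
  constructor
  · rintro ⟨N, f, hf, rfl, hN⟩
    exact ⟨_, hN (Fin.last d), hf.exactSeqVia fun i => hN i.castSucc⟩
  · rintro ⟨K, hK, h⟩
    obtain ⟨N, f, hf, hM, rfl, hN⟩ := h.exists_isExactSeq
    exact ⟨N, f, hf, hM, Fin.lastCases hK hN⟩

end Indexed

end ExactSequences

section Duality

variable {S : Type} [Ring S] {Λ : Type} [Fintype Λ] [PartialOrder Λ] {Q : QHData S Λ}

namespace Duality

variable (dual : Duality S Q) {A B C M X Y : ModuleCat.{0} S} [Module.Finite S A]
  [Module.Finite S B]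

protected theorem map_zero : dual.Dmap (0 : A →ₗ[S] B) = 0 := by
  simpa using dual.Dadd (A := A) (B := B) inferInstance inferInstance 0 0

theorem eq_zero_of_map_eq_zero {f : A →ₗ[S] B} (h : dual.Dmap f = 0) : f = 0 :=
  (dual.Dfull inferInstance inferInstance).injective (h.trans dual.map_zero.symm)

theorem subsingleton_obj [Subsingleton A] : Subsingleton (dual.D A) := by
  have hid : (LinearMap.id : dual.D A →ₗ[S] dual.D A) = 0 := by
    rw [← dual.Did A inferInstance, ← dual.map_zero]
    exact congrArg dual.Dmap (LinearMap.ext fun _ => Subsingleton.elim _ _)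
  exact subsingleton_of_forall_eq 0 fun x => LinearMap.congr_fun hid x

theorem nonempty_obj_equiv (e : A ≃ₗ[S] B) : Nonempty (dual.D A ≃ₗ[S] dual.D B) := by
  refine ⟨.ofLinearMap (dual.Dmap e.symm.toLinearMap) (dual.Dmap e.toLinearMap) ?_ ?_⟩
  · rw [← dual.Dcomp inferInstance inferInstance inferInstance, LinearEquiv.comp_symm,
      dual.Did _ inferInstance]
  · rw [← dual.Dcomp inferInstance inferInstance inferInstance, LinearEquiv.symm_comp,
      dual.Did _ inferInstance]

theorem isShortExact_map [Module.Finite S C] {f : A →ₗ[S] B} {g : B →ₗ[S] C}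
    (h : IsShortExact f g) : IsShortExact (dual.Dmap g) (dual.Dmap f) := by
  obtain ⟨hinj, hsurj, hex⟩ := dual.Dexact inferInstance inferInstance inferInstance f g
    h.injective h.surjective h.exact.linearMap_ker_eq.symm
  exact ⟨hinj, LinearMap.exact_iff.2 hex.symm, hsurj⟩

theorem map_surjective {f : A →ₗ[S] B} (hf : Function.Injective f) :
    Function.Surjective (dual.Dmap f) :=
  (dual.isShortExact_map (C := ModuleCat.of S (B ⧸ LinearMap.range f))
    (.mkQ_range hf)).surjective

theorem surjective_of_map_injective {f : A →ₗ[S] B} (hf : Function.Injective (dual.Dmap f)) :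
    Function.Surjective f := by
  let q : B →ₗ[S] ModuleCat.of S (B ⧸ LinearMap.range f) := (LinearMap.range f).mkQ
  have hq : dual.Dmap q = 0 := by
    refine (LinearMap.cancel_left hf).1 ?_
    rw [← dual.Dcomp inferInstance inferInstance inferInstance,
      show q ∘ₗ f = 0 from LinearMap.range_mkQ_comp f, dual.map_zero, LinearMap.comp_zero]
  rw [← LinearMap.range_eq_top, ← (LinearMap.range f).ker_mkQ]
  exact LinearMap.ker_eq_top.2 (dual.eq_zero_of_map_eq_zero hq)

theorem exists_map_eq_comp (f : A →ₗ[S] dual.D B) :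
    ∃ (r : B →ₗ[S] dual.D A) (e : dual.D (dual.D A) ≃ₗ[S] A), dual.Dmap r = f ∘ₗ e := by
  obtain ⟨e⟩ := dual.Dinvol A inferInstance
  obtain ⟨r, hr⟩ := (dual.Dfull inferInstance (dual.finD A inferInstance)).surjective (f ∘ₗ e)
  exact ⟨r, e, hr⟩

theorem exists_map_eq_symm_comp (f : dual.D B →ₗ[S] A) :
    ∃ (r : dual.D A →ₗ[S] B) (e : dual.D (dual.D A) ≃ₗ[S] A), dual.Dmap r = e.symm ∘ₗ f := by
  obtain ⟨e⟩ := dual.Dinvol A inferInstance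
  obtain ⟨r, hr⟩ := (dual.Dfull (dual.finD A inferInstance) inferInstance).surjective (e.symm ∘ₗ f)
  exact ⟨r, e, hr⟩

theorem shortExactSeq_obj (h : ShortExactSeq A B C) :
    ShortExactSeq (dual.D C) (dual.D B) (dual.D A) := by
  have := h.finite_right ‹_›
  obtain ⟨f, g, hfg⟩ := h
  exact ⟨_, _, dual.isShortExact_map hfg⟩

variable [IsNoetherianRing S]

theorem map_injective {f : A →ₗ[S] B} (hf : Function.Surjective f) :
    Function.Injective (dual.Dmap f) :=
  (dual.isShortExact_map (A := ModuleCat.of S (LinearMap.ker f)) (.subtype_ker hf)).injective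

theorem injective_of_map_surjective {f : A →ₗ[S] B} (hf : Function.Surjective (dual.Dmap f)) :
    Function.Injective f := by
  let j : ModuleCat.of S (LinearMap.ker f) →ₗ[S] A := (LinearMap.ker f).subtype
  have hj : dual.Dmap j = 0 := by
    refine (LinearMap.cancel_right hf).1 ?_
    rw [← dual.Dcomp inferInstance inferInstance inferInstance,
      show f ∘ₗ j = 0 from LinearMap.comp_ker_subtype f, dual.map_zero, LinearMap.zero_comp]
  rw [← LinearMap.ker_eq_bot, ← (LinearMap.ker f).range_subtype]
  exact LinearMap.range_eq_bot.2 (dual.eq_zero_of_map_eq_zero hj)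

theorem isEssentialMono_map {p : A →ₗ[S] B} (hp : IsSuperfluousEpi p) :
    IsEssentialMono (dual.Dmap p) := by
  have hpD := dual.map_injective hp.surjective
  refine ⟨hpD, fun K hK => ?_⟩
  have := dual.finD A inferInstance
  let Y := ModuleCat.of S (dual.D A ⧸ K)
  have := dual.finD Y inferInstance
  obtain ⟨r, e, hr⟩ := dual.exists_map_eq_symm_comp (A := Y) K.mkQ
  have hinj : Function.Injective (dual.Dmap (p ∘ₗ r)) := by
    rw [dual.Dcomp inferInstance inferInstance inferInstance, hr, ← LinearMap.ker_eq_bot,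
      LinearMap.comp_assoc, LinearEquiv.ker_comp, LinearMap.ker_comp, Submodule.ker_mkQ, hK]
  have hr_surj := hp.surjective_of_comp (dual.surjective_of_map_injective hinj)
  rw [← K.ker_mkQ, ← LinearEquiv.ker_comp e.symm, ← hr]
  exact LinearMap.ker_eq_bot.2 (dual.map_injective hr_surj)

theorem isSuperfluousEpi_map {i : A →ₗ[S] B} (hi : IsEssentialMono i) :
    IsSuperfluousEpi (dual.Dmap i) := by
  refine ⟨dual.map_surjective hi.injective, fun K hK => ?_⟩
  have := dual.finD B inferInstance
  let X := ModuleCat.of S K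
  have := dual.finD X inferInstance
  obtain ⟨r, e, hr⟩ := dual.exists_map_eq_comp (A := X) K.subtype
  have hsurj : Function.Surjective (dual.Dmap (r ∘ₗ i)) := by
    rw [dual.Dcomp inferInstance inferInstance inferInstance, hr, ← LinearMap.range_eq_top,
      ← LinearMap.comp_assoc, LinearEquiv.range_comp, LinearMap.range_comp, Submodule.range_subtype,
      hK]
  have hr_inj := hi.injective_of_comp (dual.injective_of_map_surjective hsurj)
  rw [← K.range_subtype, ← LinearEquiv.range_comp e, ← hr]
  exact LinearMap.range_eq_top.2 (dual.map_surjective hr_inj)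

theorem isCompFactor_of_obj {m : Λ} (h : IsCompFactor S (Q.L m) (dual.D A)) :
    IsCompFactor S (Q.L m) A := by
  obtain ⟨U, V, -, ⟨e⟩⟩ := h
  have := dual.finD A inferInstance
  have := Q.finiteL m
  let g : ModuleCat.of S V →ₗ[S] Q.L m := e ∘ₗ (U.comap V.subtype).mkQ
  have hg : Function.Surjective g := e.surjective.comp (Submodule.mkQ_surjective _)
  let j : ModuleCat.of S V →ₗ[S] dual.D A := V.subtype
  obtain ⟨eL⟩ := dual.DL m
  obtain ⟨eA⟩ := dual.Dinvol A inferInstance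
  have hV : IsCompFactor S (Q.L m) (dual.D (ModuleCat.of S V)) :=
    (isCompFactor_simple_self Q m).of_injective (dual.Dmap g ∘ₗ eL.symm)
      ((dual.map_injective hg).comp eL.symm.injective)
  exact hV.of_surjective (dual.Dmap j ∘ₗ eA.symm)
    ((dual.map_surjective V.subtype_injective).comp eA.symm.surjective)

theorem filteredBy_obj {ι : Type*} {X Y : ι → ModuleCat.{0} S}
    (e : ∀ i, Nonempty (dual.D (X i) ≃ₗ[S] Y i)) {s : Multiset ι} (h : FilteredBy X s M)
    (hM : Module.Finite S M) : FilteredBy Y s (dual.D M) := by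
  induction h with
  | zero M =>
    have := dual.subsingleton_obj (A := M)
    exact .zero _
  | @cons i s M' M h _ ih =>
    obtain ⟨e⟩ := e i
    have := h.finite_left hM
    rw [← Multiset.singleton_add, add_comm]
    exact .extension (dual.shortExactSeq_obj h) ((FilteredBy.singleton Y i).congr e.symm) (ih this)

end Duality

end Duality

section CostandardModules

variable {S : Type} [Ring S] {Λ : Type} [Fintype Λ] [PartialOrder Λ] {Q : QHData S Λ} {m : Λ}
  {M X : ModuleCat.{0} S} {d : ℕ}

theorem exists_surjective_std {p : X →ₗ[S] Q.L m} (hp : IsSuperfluousEpi p)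
    (hX : ∀ j, IsCompFactor S (Q.L j) X → j ≤ m) :
    ∃ f : Q.std m →ₗ[S] X, Function.Surjective f := by
  obtain ⟨K, ⟨e⟩, -, hmin⟩ := Q.stdSpec m
  obtain ⟨π, hπ⟩ := Q.exists_isSuperfluousEpi m
  obtain ⟨t, rfl⟩ := Module.projective_lifting_property p π hp.surjective
  have ht := hp.surjective_of_comp hπ.surjective
  let ek := t.quotKerEquivOfSurjective ht
  have hK : K ≤ LinearMap.ker t := hmin _ fun j hj =>
    hX j (hj.of_injective (A := ModuleCat.of S (Q.P m ⧸ LinearMap.ker t)) ek.toLinearMap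
      ek.injective)
  have hlift : Function.Surjective (K.liftQ t hK) := fun x =>
    let ⟨y, hy⟩ := ht x
    ⟨K.mkQ y, hy⟩
  exact ⟨K.liftQ t hK ∘ₗ e.toLinearMap, hlift.comp e.surjective⟩

theorem exists_injective_costd {i : Q.L m →ₗ[S] X} (hi : IsEssentialMono i)
    (hX : ∀ j, IsCompFactor S (Q.L j) X → j ≤ m) :
    ∃ f : X →ₗ[S] Q.costd m, Function.Injective f ∧ IsEssentialMono (f ∘ₗ i) := by
  obtain ⟨V, ⟨e⟩, -, hmax⟩ := Q.costdSpec m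
  obtain ⟨hI, ι, hι, hbot⟩ := Q.injHull m
  have hess : IsEssentialMono ι := by
    refine ⟨hι, fun K hK => hbot K ?_⟩
    rw [inf_comm, ← Submodule.map_comap_eq, hK, Submodule.map_bot]
  obtain ⟨h, hh⟩ := hI.out i hi.injective ι
  obtain rfl : h ∘ₗ i = ι := LinearMap.ext hh
  have hinj := hi.injective_of_comp hess.injective
  let ek := LinearEquiv.ofInjective h hinj
  have hV : LinearMap.range h ≤ V := hmax _ fun j hj =>
    hX j (hj.of_injective (A := ModuleCat.of S (LinearMap.range h)) ek.symm.toLinearMap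
      ek.symm.injective)
  let f : X →ₗ[S] Q.costd m := e.symm.toLinearMap ∘ₗ h.codRestrict V fun x => hV ⟨x, rfl⟩
  let g : Q.costd m →ₗ[S] Q.I m := V.subtype ∘ₗ e.toLinearMap
  have hgf : g ∘ₗ f = h := by
    ext x
    simp [f, g]
  rw [← hgf] at hinj hess
  exact ⟨f, .of_comp (f := g) hinj, .of_comp (f := g) hess (V.subtype_injective.comp e.injective)⟩

namespace Duality

variable (dual : Duality S Q)

section Noetherian

variable [IsNoetherianRing S]

theorem exists_injective_obj_std [Module.Finite S X] {i : Q.L m →ₗ[S] X} (hi : IsEssentialMono i)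
    (hX : ∀ j, IsCompFactor S (Q.L j) X → j ≤ m) :
    ∃ f : X →ₗ[S] dual.D (Q.std m), Function.Injective f := by
  have := Q.finiteL m
  have := Q.finite_std m
  have := dual.finD X inferInstance
  obtain ⟨eL⟩ := dual.DL m
  obtain ⟨eX⟩ := dual.Dinvol X inferInstance
  obtain ⟨g, hg⟩ := exists_surjective_std ((dual.isSuperfluousEpi_map hi).equiv_comp eL)
    fun j hj => hX j (dual.isCompFactor_of_obj hj)
  exact ⟨dual.Dmap g ∘ₗ eX.symm.toLinearMap, (dual.map_injective hg).comp eX.symm.injective⟩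

theorem exists_injective_obj_std_costd (m : Λ) :
    ∃ (i : Q.L m →ₗ[S] dual.D (Q.std m)) (j : dual.D (Q.std m) →ₗ[S] Q.costd m),
      Function.Injective j ∧ IsEssentialMono (j ∘ₗ i) := by
  have := Q.finiteL m
  have := Q.finite_std m
  obtain ⟨R, u, v, -, hv, -⟩ := exists_radical_std Q m
  obtain ⟨eL⟩ := dual.DL m
  exact ⟨_, exists_injective_costd ((dual.isEssentialMono_map hv).comp_equiv eL.symm)
    fun j hj => le_of_isCompFactor_std (dual.isCompFactor_of_obj hj)⟩

end Noetherian

variable [IsArtinianRing S]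

/- `∇` is not known to be finitely generated beforehand, so surjectivity of `D Δ → ∇` is tested on
finitely generated submodules `W ⊇ D Δ`, which embed in `D Δ` and hence coincide with it. -/
theorem nonempty_obj_std_equiv (m : Λ) : Nonempty (dual.D (Q.std m) ≃ₗ[S] Q.costd m) := by
  have := dual.finD _ (Q.finite_std m)
  obtain ⟨i, j, hj, hji⟩ := dual.exists_injective_obj_std_costd m
  refine ⟨.ofBijective j ⟨hj, fun y => ?_⟩⟩
  let W : Submodule S (Q.costd m) := LinearMap.range j ⊔ Submodule.span S {y}
  have hjW (x : dual.D (Q.std m)) : j x ∈ W := Submodule.mem_sup_left ⟨x, rfl⟩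
  have hyW : y ∈ W := Submodule.mem_sup_right (Submodule.mem_span_singleton_self y)
  let j' : dual.D (Q.std m) →ₗ[S] ModuleCat.of S W := j.codRestrict W hjW
  have hess : IsEssentialMono (j' ∘ₗ i) := .of_comp (f := W.subtype) hji W.subtype_injective
  have hW (n : Λ) (h : IsCompFactor S (Q.L n) (ModuleCat.of S W)) : n ≤ m :=
    le_of_isCompFactor_costd (h.of_injective W.subtype W.subtype_injective)
  have : Module.Finite S W := Submodule.finite_sup _ _
  obtain ⟨f, hf⟩ := dual.exists_injective_obj_std hess hW
  have hj' : Function.Injective j' := hj.codRestrict hjW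
  obtain ⟨z, hz⟩ := IsArtinian.surjective_of_injective_endomorphism (j' ∘ₗ f) (hj'.comp hf) ⟨y, hyW⟩
  exact ⟨f z, congrArg Subtype.val hz⟩

include dual in
theorem finite_costd (m : Λ) : Module.Finite S (Q.costd m) := by
  obtain ⟨e⟩ := dual.nonempty_obj_std_equiv m
  have := dual.finD _ (Q.finite_std m)
  exact .equiv e

theorem nonempty_obj_costd_equiv (m : Λ) : Nonempty (dual.D (Q.costd m) ≃ₗ[S] Q.std m) := by
  have := Q.finite_std m
  have := dual.finD _ (Q.finite_std m)
  have := dual.finite_costd m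
  obtain ⟨e⟩ := dual.nonempty_obj_std_equiv m
  obtain ⟨e'⟩ := dual.nonempty_obj_equiv e
  obtain ⟨einv⟩ := dual.Dinvol (Q.std m) inferInstance
  exact ⟨e'.symm.trans einv⟩

theorem inCostdFilt_obj (h : InStdFilt S Q M) : InCostdFilt S Q (dual.D M) := by
  obtain ⟨s, hs⟩ := inStdFilt_iff.1 h
  exact inCostdFilt_iff.2 ⟨s, dual.filteredBy_obj dual.nonempty_obj_std_equiv hs h.finite⟩

theorem inStdFilt_obj (h : InCostdFilt S Q M) : InStdFilt S Q (dual.D M) := by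
  obtain ⟨s, hs⟩ := inCostdFilt_iff.1 h
  exact inStdFilt_iff.2
    ⟨s, dual.filteredBy_obj dual.nonempty_obj_costd_equiv hs (hs.finite dual.finite_costd)⟩

theorem coresDimLE_obj (h : ResDimLE (InStdFilt S Q) d M) :
    CoresDimLE (InCostdFilt S Q) d (dual.D M) := by
  induction d generalizing M with
  | zero => exact dual.inCostdFilt_obj h
  | succ d ih =>
    obtain ⟨K, F, hM, hF, hK⟩ := h
    have := hF.finite
    have := hM.finite_left this
    exact ⟨_, _, dual.shortExactSeq_obj hM, dual.inCostdFilt_obj hF, ih hK⟩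

theorem resDimLE_obj [Module.Finite S M] (h : CoresDimLE (InCostdFilt S Q) d M) :
    ResDimLE (InStdFilt S Q) d (dual.D M) := by
  induction d generalizing M with
  | zero => exact dual.inStdFilt_obj h
  | succ d ih =>
    obtain ⟨F, C, hM, hF, hC⟩ := h
    obtain ⟨s, hs⟩ := inCostdFilt_iff.1 hF
    have := hs.finite dual.finite_costd
    have := hM.finite_right this
    exact ⟨_, _, dual.shortExactSeq_obj hM, dual.inStdFilt_obj hF, ih hC⟩

include dual in
theorem gfd_simple_eq_wfd (m : Λ) : gfd S Q (Q.L m) = wfd S Q (Q.L m) := by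
  have := Q.finiteL m
  obtain ⟨e⟩ := dual.DL m
  refine congrArg sInf (Set.ext fun d => ?_)
  simp only [Set.mem_ofPred_eq, gfdLE_iff, wfdLE_iff]
  exact ⟨fun h => (dual.resDimLE_obj h).congr (isResolving_inStdFilt Q) e,
    fun h => (dual.coresDimLE_obj h).congr .congr e⟩

end Duality

end CostandardModules

section DeltaFiltrationDimension

variable {S : Type} [Ring S] [IsArtinianRing S] {Λ : Type} [Fintype Λ] [PartialOrder Λ]
  {Q : QHData S Λ} {m : Λ} {A B C M : ModuleCat.{0} S} {d : ℕ}

theorem wfd_le_iff [Module.Finite S M] : wfd S Q M ≤ d ↔ ResDimLE (InStdFilt S Q) d M := by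
  refine ⟨fun h => ?_, fun h => Nat.sInf_le (wfdLE_iff.2 h)⟩
  obtain ⟨e, he⟩ := exists_resDimLE Q M
  have hne : {e | WfdLE S Q M e}.Nonempty := ⟨e, wfdLE_iff.2 he⟩
  exact (wfdLE_iff.1 (Nat.sInf_mem hne)).mono (isResolving_inStdFilt Q) h

theorem wfd_le_of_isCompFactor [Module.Finite S M]
    (h : ∀ j, IsCompFactor S (Q.L j) M → wfd S Q (Q.L j) ≤ d) : wfd S Q M ≤ d :=
  wfd_le_iff.2 (resDimLE_of_isCompFactor fun j hj =>
    have := Q.finiteL j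
    wfd_le_iff.1 (h j hj))

theorem wfd_left_le [Module.Finite S A] [Module.Finite S B] [Module.Finite S C]
    (h : ShortExactSeq A B C) (hB : wfd S Q B ≤ d) (hC : wfd S Q C ≤ d + 1) : wfd S Q A ≤ d :=
  wfd_le_iff.2 ((wfd_le_iff.1 hB).left (isResolving_inStdFilt Q) h (wfd_le_iff.1 hC))

theorem wfd_costd_eq (dual : Duality S Q) (h : ∀ j < m, wfd S Q (Q.L j) ≤ wfd S Q (Q.L m)) :
    wfd S Q (Q.costd m) = wfd S Q (Q.L m) := by
  have hle (j : Λ) (hj : j ≤ m) : wfd S Q (Q.L j) ≤ wfd S Q (Q.L m) :=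
    hj.eq_or_lt.elim (fun hjm => hjm ▸ le_rfl) (h j)
  have := Q.finiteL m
  have := dual.finite_costd m
  obtain ⟨i, f, -, hfi⟩ := dual.exists_injective_obj_std_costd m
  obtain ⟨C, g, hg⟩ : ∃ (C : ModuleCat.{0} S) (g : Q.costd m →ₗ[S] C), IsShortExact (f ∘ₗ i) g :=
    ⟨ModuleCat.of S _, _, .mkQ_range hfi.injective⟩
  have : Module.Finite S C := .of_surjective g hg.surjective
  have hcostd : wfd S Q (Q.costd m) ≤ wfd S Q (Q.L m) :=
    wfd_le_of_isCompFactor fun j hj => hle j (le_of_isCompFactor_costd hj)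
  have hcoker : wfd S Q C ≤ wfd S Q (Q.L m) :=
    wfd_le_of_isCompFactor fun j hj =>
      hle j (le_of_isCompFactor_costd (hj.of_surjective g hg.surjective))
  refine hcostd.antisymm (not_lt.1 fun hlt => ?_)
  obtain ⟨d, hd⟩ := Nat.exists_eq_add_of_lt hlt
  have hsimple := wfd_left_le ⟨_, g, hg⟩ (Nat.le_add_right _ d) (hcoker.trans_eq hd)
  exact (Nat.lt_succ_of_le hsimple).ne hd

end DeltaFiltrationDimension

end QHPaper

open QHPaper in
theorem stmt14_general {S Λ : Type} [Ring S] [IsArtinianRing S] [Fintype Λ] [PartialOrder Λ]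
    {Q : QHData S Λ} (dual : Duality S Q) (hA : PropA S Q) : PropD S Q := fun m =>
  wfd_costd_eq dual fun j hj => by
    simpa only [dual.gfd_simple_eq_wfd] using hA j m hj

open QHPaper in
/-- Let `S` be a quasi-hereditary algebra with a simple-preserving duality
whose partial order is minimal for the quasi-hereditary structure. If `S` satisfies
property A, then `S` satisfies property D. -/
theorem stmt14 (k S Λ : Type) [Field k] [Ring S] [Algebra k S] [FiniteDimensional k S]
    [Fintype Λ] [PartialOrder Λ]
    (QH : QHData S Λ) (dual : Duality S QH) (hmin : MinimalOrder S QH)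
    (hA : PropA S QH) :
    PropD S QH := by
  have := IsArtinianRing.of_finite k S
  exact stmt14_general dual hA
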